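/- arXiv:1107.4378 — 5 statements merged into one kernel-verified Lean document; each statement's English description precedes it below -/
import Mathlib

section
/- For every vertex v of the random cuckoo graph with n edges on parts of size m, and every natural number k ≥ 1, Pr(C(v) ≥ k) ≤ (n·k/m)^k · (1/k!), where the probability is over the uniform independent choice of the hash values. -/
open Classical

/-- Adjacency: item `x` gives an edge from left vertex `h₀ x` to right vertex `h₁ x`. -/
def cuckooAdj (n m : ℕ) (h₀ h₁ : Fin n → Fin m) (a b : Fin m ⊕ Fin m) : Prop :=
  ∃ x : Fin n, a = Sum.inl (h₀ x) ∧ b = Sum.inr (h₁ x)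

/-- Connectivity in the cuckoo graph: equivalence generated by adjacency. -/
def cuckooConn (n m : ℕ) (h₀ h₁ : Fin n → Fin m) : (Fin m ⊕ Fin m) → (Fin m ⊕ Fin m) → Prop :=
  Relation.EqvGen (cuckooAdj n m h₀ h₁)

/-- `C(v)`: number of edges (items, with multiplicity) in the component of `v`. -/
noncomputable def cuckooC (n m : ℕ) (h₀ h₁ : Fin n → Fin m) (v : Fin m ⊕ Fin m) : ℕ :=
  Nat.card {x : Fin n // cuckooConn n m h₀ h₁ (Sum.inl (h₀ x)) v}

/-- `V(v)`: number of vertices in the component of `v`. -/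
noncomputable def cuckooV (n m : ℕ) (h₀ h₁ : Fin n → Fin m) (v : Fin m ⊕ Fin m) : ℕ :=
  Nat.card {u : Fin m ⊕ Fin m // cuckooConn n m h₀ h₁ u v}

/-- `B_v`: cyclotomic number of the component of `v`, `C(v) − V(v) + 1`. -/
noncomputable def cuckooB (n m : ℕ) (h₀ h₁ : Fin n → Fin m) (v : Fin m ⊕ Fin m) : ℕ :=
  cuckooC n m h₀ h₁ v + 1 - cuckooV n m h₀ h₁ v

/-- The sample space: a pair of hash functions chosen uniformly at random. -/
abbrev HashPair (n m : ℕ) := (Fin n → Fin m) × (Fin n → Fin m)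

/-- Probability of an event under uniformly random hash functions. -/
noncomputable def cuckooPr (n m : ℕ) (E : HashPair n m → Prop) : ℝ :=
  (Nat.card {ω : HashPair n m // E ω} : ℝ) / (Nat.card (HashPair n m) : ℝ)

/-- Expectation of a real random variable under uniformly random hash functions. -/
noncomputable def cuckooE (n m : ℕ) (f : HashPair n m → ℝ) : ℝ :=
  (∑ ω : HashPair n m, f ω) / (Nat.card (HashPair n m) : ℝ)

/-- `X_i`: number of vertices lying in components with exactly `i` edges. -/
noncomputable def cuckooX (n m : ℕ) (h₀ h₁ : Fin n → Fin m) (i : ℕ) : ℕ :=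
  Nat.card {v : Fin m ⊕ Fin m // cuckooC n m h₀ h₁ v = i}

/-- The setoid of connected components. -/
def cuckooSetoid (n m : ℕ) (h₀ h₁ : Fin n → Fin m) : Setoid (Fin m ⊕ Fin m) :=
  ⟨cuckooConn n m h₀ h₁, Relation.EqvGen.is_equivalence _⟩

/-- `ē(G) = ∑_H max(e(H),0)`, the total excess over all components
(`ℕ`-subtraction realizes the `max` with `0`). -/
noncomputable def cuckooEbar (n m : ℕ) (h₀ h₁ : Fin n → Fin m) : ℕ :=
  ∑ᶠ c : Quotient (cuckooSetoid n m h₀ h₁),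
    (Nat.card {x : Fin n // Quotient.mk (cuckooSetoid n m h₀ h₁) (Sum.inl (h₀ x)) = c}
      - Nat.card {u : Fin m ⊕ Fin m // Quotient.mk (cuckooSetoid n m h₀ h₁) u = c})

/-!
If the component of `v` has at least `k` edges, then growing a connected edge set from `v` one edge
at a time yields a set `S` of `k` edges in which every edge is attached either to `v` or to the far
end of another edge of `S`, its parent. There are `n.choose k` sets `S` and, as no edge is its own
parent, at most `k ^ k` parent maps on `S`. Once both are fixed, bipartiteness determines which end
of each edge of `S` is the attached one, and the hash value there is forced by the hash values at
the far ends. So each pair `(S, parent map)` has probability at most `m ^ (-k)`, and the union bound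
gives `n.choose k * k ^ k / m ^ k`.
-/

section Counting

open Finset

theorem card_mul_pow_le_of_injOn_restrict_compl {Ω ι β : Type*} [Fintype ι] [DecidableEq ι]
    [Fintype β] (F : Ω → ι → β) (A : Finset Ω) (T : Finset ι)
    (hF : Set.InjOn (fun ω => Tᶜ.restrict (F ω)) A) :
    #A * Fintype.card β ^ #T ≤ Fintype.card β ^ Fintype.card ι := by
  have hA : #A ≤ Fintype.card β ^ #Tᶜ := by
    calc #A ≤ #(univ : Finset (↥Tᶜ → β)) :=
          card_le_card_of_injOn _ (fun _ _ => mem_coe.2 (mem_univ _)) hF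
      _ = Fintype.card β ^ #Tᶜ := by rw [card_univ, Fintype.card_fun, Fintype.card_coe]
  calc #A * Fintype.card β ^ #T ≤ Fintype.card β ^ #Tᶜ * Fintype.card β ^ #T := by gcongr
    _ = Fintype.card β ^ Fintype.card ι := by rw [← pow_add, card_compl_add_card]

variable {α : Type*} [Fintype α] [DecidableEq α]

/-- The possible parent maps on a set `S` of edges: an edge of `S` has another edge of `S` as its
parent, or none if it is attached to the root. Edges outside `S` get the value `none`, so that a
parent map is determined by its values on `S`. -/
def parentMaps (S : Finset α) : Finset (α → Option α) :=
  Fintype.piFinset fun x => if x ∈ S then insertNone (S.erase x) else {none}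

theorem mem_parentMaps {S : Finset α} {p : α → Option α} :
    p ∈ parentMaps S ↔ ∀ x y, p x = some y → x ∈ S ∧ y ∈ S ∧ y ≠ x := by
  rw [parentMaps, Fintype.mem_piFinset]
  refine forall_congr' fun x => ?_
  by_cases hx : x ∈ S
  · simp [hx, mem_insertNone, and_comm]
  · simp [hx, Option.eq_none_iff_forall_ne_some]

theorem card_parentMaps (S : Finset α) : #(parentMaps S) = #S ^ #S := by
  have hcard (x : α) :
      #(if x ∈ S then insertNone (S.erase x) else {none}) = if x ∈ S then #S else 1 := by
    split_ifs with hx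
    · rw [card_insertNone, card_erase_add_one hx]
    · exact card_singleton _
  rw [parentMaps, Fintype.card_piFinset, prod_congr rfl fun x _ => hcard x, prod_ite_mem,
    univ_inter, prod_const]

theorem update_mem_parentMaps_insert {S : Finset α} {p : α → Option α} (hp : p ∈ parentMaps S)
    {x : α} (hx : x ∉ S) {q : Option α} (hq : q ∈ insertNone S) :
    Function.update p x q ∈ parentMaps (insert x S) := by
  rw [mem_parentMaps] at hp ⊢
  intro z y hzy
  obtain rfl | hz := eq_or_ne z x
  · have hy : y ∈ S := mem_insertNone.1 hq y (by simpa using hzy)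
    exact ⟨mem_insert_self _ _, mem_insert_of_mem hy, ne_of_mem_of_not_mem hy hx⟩
  · obtain ⟨hzS, hyS, hyz⟩ := hp z y (by rwa [Function.update_of_ne hz] at hzy)
    exact ⟨mem_insert_of_mem hzS, mem_insert_of_mem hyS, hyz⟩

end Counting

/-- The half-edges of a multigraph with edge set `α`: `Sum.inl x` and `Sum.inr x` are the two halves
of the edge `x`, exchanged by `Sum.swap`. A multigraph on the vertex set `V` is then a map
`f : HalfEdge α → V`; the cuckoo graph of `h₀, h₁` is `Sum.map h₀ h₁`. -/
abbrev HalfEdge (α : Type*) := α ⊕ α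

namespace HalfEdge

variable {α : Type*}

/-- The edge to which a half-edge belongs. -/
def edge : HalfEdge α → α := Sum.elim id id

@[simp]
theorem edge_swap (i : HalfEdge α) : edge i.swap = edge i := by
  cases i <;> rfl

theorem eq_of_edge_eq_of_isLeft_eq {i j : HalfEdge α} (hedge : edge i = edge j)
    (hside : i.isLeft = j.isLeft) : i = j := by
  cases i <;> cases j <;> simp_all [edge]

theorem eq_or_eq_swap_of_edge_eq {i j : HalfEdge α} (h : edge i = edge j) :
    i = j ∨ i = j.swap := by
  cases i <;> cases j <;> simp_all [edge]

theorem swap_ne_self (i : HalfEdge α) : i.swap ≠ i := by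
  cases i <;> simp

end HalfEdge

open HalfEdge

/-- In the multigraph `f` with root `v` and parent map `p`, the half-edge `i` is the end at which
its edge hangs from the root: it lies at `v` if the edge has no parent, and otherwise at the far end
of the parent, which hangs from the root in turn. Being inductive, this excludes cycles of `p`. -/
inductive Attached {α V : Type*} (f : HalfEdge α → V) (v : V) (p : α → Option α) :
    HalfEdge α → Prop
  | root {i : HalfEdge α} : p (edge i) = none → f i = v → Attached f v p i
  | child {i j : HalfEdge α} :
      p (edge i) = some (edge j) → Attached f v p j → f i = f j.swap → Attached f v p i

section Exploration

open Finset Function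

variable {α V : Type*} [Fintype α] [DecidableEq α] {f : HalfEdge α → V} {v : V} {S : Finset α}
  {p : α → Option α}

/-- The edges of `S` form a connected exploration of the multigraph `f` from the root `v`, in which
each edge has been discovered through its parent under `p`. -/
structure Explores (f : HalfEdge α → V) (v : V) (S : Finset α) (p : α → Option α) : Prop where
  parentMap_mem : p ∈ parentMaps S
  exists_attached : ∀ x ∈ S, ∃ i, edge i = x ∧ Attached f v p i

/-- The vertices discovered by an exploration: the root and the far ends of the explored edges. -/
def discovered (f : HalfEdge α → V) (v : V) (S : Finset α) (p : α → Option α) : Set V :=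
  {u | u = v ∨ ∃ j, edge j ∈ S ∧ Attached f v p j ∧ u = f j.swap}

theorem explores_empty (f : HalfEdge α → V) (v : V) : Explores f v ∅ fun _ => none where
  parentMap_mem := mem_parentMaps.2 (by simp)
  exists_attached := by simp

theorem Explores.mem_discovered (h : Explores f v S p) {i : HalfEdge α} (hi : edge i ∈ S) :
    f i ∈ discovered f v S p := by
  obtain ⟨j, hji, hj⟩ := h.exists_attached _ hi
  obtain rfl | rfl := eq_or_eq_swap_of_edge_eq hji.symm
  · cases hj with
    | root _ hv => exact Or.inl hv
    | child hparent hj hfj =>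
      exact Or.inr ⟨_, (mem_parentMaps.1 h.parentMap_mem _ _ hparent).2.1, hj, hfj⟩
  · exact Or.inr ⟨j, hji ▸ hi, hj, rfl⟩

theorem Attached.update_parentMap {i : HalfEdge α} (h : Attached f v p i) (hp : p ∈ parentMaps S)
    (hi : edge i ∈ S) {x : α} (hx : x ∉ S) (q : Option α) :
    Attached f v (update p x q) i := by
  induction h with
  | root hnone hv =>
    exact .root (by rwa [update_of_ne (ne_of_mem_of_not_mem hi hx)]) hv
  | child hparent _ hf ih =>
    exact .child (by rwa [update_of_ne (ne_of_mem_of_not_mem hi hx)])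
      (ih (mem_parentMaps.1 hp _ _ hparent).2.1) hf

theorem Explores.insert_edge (h : Explores f v S p) {i : HalfEdge α} (hi : edge i ∉ S)
    {q : Option α} (hq : q ∈ insertNone S) (hatt : Attached f v (update p (edge i) q) i) :
    Explores f v (insert (edge i) S) (update p (edge i) q) where
  parentMap_mem := update_mem_parentMaps_insert h.parentMap_mem hi hq
  exists_attached x hx := by
    obtain rfl | hx := mem_insert.1 hx
    · exact ⟨i, rfl, hatt⟩
    · obtain ⟨j, rfl, hj⟩ := h.exists_attached x hx
      exact ⟨j, rfl, hj.update_parentMap h.parentMap_mem hx hi q⟩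

theorem Explores.exists_insert (h : Explores f v S p) {i : HalfEdge α} (hi : edge i ∉ S)
    (hfi : f i ∈ discovered f v S p) : ∃ p', Explores f v (insert (edge i) S) p' := by
  obtain hv | ⟨j, hjS, hj, hfj⟩ := hfi
  · exact ⟨_, h.insert_edge hi none_mem_insertNone (.root (update_self ..) hv)⟩
  · exact ⟨_, h.insert_edge hi (some_mem_insertNone.2 hjS)
      (.child (update_self ..) (hj.update_parentMap h.parentMap_mem hjS hi _) hfj)⟩

end Exploration

section Bipartite

open Finset

variable {α β : Type*} {v : β ⊕ β} {p : α → Option α} {ω ω' : (α → β) × (α → β)}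

-- Along a chain of parents the sides alternate, starting from the side of `v`.
theorem Attached.eq_of_edge_eq {i i' : HalfEdge α} (h : Attached (Sum.map ω.1 ω.2) v p i)
    (h' : Attached (Sum.map ω'.1 ω'.2) v p i') (hedge : edge i = edge i') : i = i' := by
  refine eq_of_edge_eq_of_isLeft_eq hedge ?_
  rw [← Sum.isLeft_map ω.1 ω.2 i, ← Sum.isLeft_map ω'.1 ω'.2 i']
  induction h generalizing i' with
  | root hnone hv =>
    cases h' with
    | root _ hv' => rw [hv, hv']
    | child hparent' _ _ => simp [← hedge, hnone] at hparent'
  | @child i j hparent _ hf ih =>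
    cases h' with
    | root hnone' _ => simp [← hedge, hparent] at hnone'
    | @child _ j' hparent' hj' hf' =>
      have hjj' : edge j = edge j' := by simpa [← hedge, hparent] using hparent'
      have hside := ih hj' hjj'
      rw [hf, hf']
      revert hside
      cases j <;> cases j' <;> simp

theorem Attached.map_eq_map {i : HalfEdge α} (h : Attached (Sum.map ω.1 ω.2) v p i)
    (h' : Attached (Sum.map ω'.1 ω'.2) v p i)
    (hfar : ∀ j, Attached (Sum.map ω.1 ω.2) v p j →
      Sum.map ω.1 ω.2 j.swap = Sum.map ω'.1 ω'.2 j.swap) :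
    Sum.map ω.1 ω.2 i = Sum.map ω'.1 ω'.2 i := by
  cases h with
  | root hnone hv =>
    cases h' with
    | root _ hv' => rw [hv, hv']
    | child hparent' _ _ => simp [hnone] at hparent'
  | @child _ j hparent hj hf =>
    cases h' with
    | root hnone' _ => simp [hparent] at hnone'
    | @child _ j' hparent' hj' hf' =>
      obtain rfl : j = j' := hj.eq_of_edge_eq hj' (by simpa [hparent] using hparent')
      rw [hf, hf', hfar j hj]

theorem map_eq_map_iff_elim_eq_elim {i : HalfEdge α} :
    Sum.map ω.1 ω.2 i = Sum.map ω'.1 ω'.2 i ↔ Sum.elim ω.1 ω.2 i = Sum.elim ω'.1 ω'.2 i := by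
  cases i <;> simp

variable [Fintype α] [DecidableEq α] {S : Finset α}

theorem Explores.eq_of_elim_eq_of_not_attached (h' : Explores (Sum.map ω'.1 ω'.2) v S p)
    (hagree : ∀ i, ¬ (edge i ∈ S ∧ Attached (Sum.map ω.1 ω.2) v p i) →
      Sum.elim ω.1 ω.2 i = Sum.elim ω'.1 ω'.2 i) : ω = ω' := by
  have hfar (j) (hj : Attached (Sum.map ω.1 ω.2) v p j) :
      Sum.map ω.1 ω.2 j.swap = Sum.map ω'.1 ω'.2 j.swap :=
    map_eq_map_iff_elim_eq_elim.2 <| hagree _ fun hswap =>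
      swap_ne_self j (hswap.2.eq_of_edge_eq hj (edge_swap j))
  have hall (i) : Sum.elim ω.1 ω.2 i = Sum.elim ω'.1 ω'.2 i := by
    by_cases hi : edge i ∈ S ∧ Attached (Sum.map ω.1 ω.2) v p i
    · obtain ⟨i', hedge, hi'⟩ := h'.exists_attached _ hi.1
      obtain rfl : i = i' := hi.2.eq_of_edge_eq hi' hedge.symm
      exact map_eq_map_iff_elim_eq_elim.1 (hi.2.map_eq_map hi' hfar)
    · exact hagree i hi
  exact Prod.ext (funext fun x => hall (.inl x)) (funext fun x => hall (.inr x))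

theorem Explores.card_attached (h : Explores (Sum.map ω.1 ω.2) v S p) :
    #{i | edge i ∈ S ∧ Attached (Sum.map ω.1 ω.2) v p i} = #S := by
  refine card_nbij edge (fun i hi => (mem_filter.1 hi).2.1) ?_ ?_
  · intro i hi j hj hij
    exact (mem_filter.1 hi).2.2.eq_of_edge_eq (mem_filter.1 hj).2.2 hij
  · intro x hx
    obtain ⟨i, rfl, hi⟩ := h.exists_attached x hx
    exact ⟨i, by simpa using ⟨hx, hi⟩, rfl⟩

theorem card_explores_mul_pow_le [Fintype β] (v : β ⊕ β) (S : Finset α) (p : α → Option α) :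
    #{ω : (α → β) × (α → β) | Explores (Sum.map ω.1 ω.2) v S p} * Fintype.card β ^ #S
      ≤ Fintype.card ((α → β) × (α → β)) := by
  obtain hempty | ⟨ω₀, hω₀⟩ :=
    eq_empty_or_nonempty {ω : (α → β) × (α → β) | Explores (Sum.map ω.1 ω.2) v S p}
  · simp [hempty]
  have h₀ : Explores (Sum.map ω₀.1 ω₀.2) v S p := (mem_filter.1 hω₀).2
  rw [← h₀.card_attached, Fintype.card_congr (Equiv.sumArrowEquivProdArrow α α β).symm,
    Fintype.card_fun]
  refine card_mul_pow_le_of_injOn_restrict_compl (fun ω => Sum.elim ω.1 ω.2) _ _ ?_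
  intro ω hω ω' hω' heq
  have h : Explores (Sum.map ω.1 ω.2) v S p := (mem_filter.1 hω).2
  refine (mem_filter.1 hω').2.eq_of_elim_eq_of_not_attached fun i hi => ?_
  refine congrFun heq ⟨i, mem_compl.2 fun hmem => hi ?_⟩
  obtain ⟨hiS, hi₀⟩ := (mem_filter.1 hmem).2
  obtain ⟨j, hedge, hj⟩ := h.exists_attached _ hiS
  exact ⟨hiS, hi₀.eq_of_edge_eq hj hedge.symm ▸ hj⟩

end Bipartite

section CuckooGraph

open Finset

variable {n m : ℕ} {h₀ h₁ : Fin n → Fin m} {v : Fin m ⊕ Fin m}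

theorem cuckooConn.mem_iff_mem {R : Set (Fin m ⊕ Fin m)}
    (hR : ∀ x, Sum.inl (h₀ x) ∈ R ↔ Sum.inr (h₁ x) ∈ R) {a b : Fin m ⊕ Fin m}
    (hab : cuckooConn n m h₀ h₁ a b) : a ∈ R ↔ b ∈ R := by
  induction hab with
  | rel a b hab =>
    obtain ⟨x, rfl, rfl⟩ := hab
    exact hR x
  | refl a => rfl
  | symm a b _ ih => exact ih.symm
  | trans a b c _ _ ihab ihbc => exact ihab.trans ihbc

theorem exists_halfEdge_of_card_lt_cuckooC {R : Set (Fin m ⊕ Fin m)} {S : Finset (Fin n)}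
    (hv : v ∈ R) (hS : ∀ i, edge i ∈ S → Sum.map h₀ h₁ i ∈ R)
    (hlt : #S < cuckooC n m h₀ h₁ v) : ∃ i, edge i ∉ S ∧ Sum.map h₀ h₁ i ∈ R := by
  by_contra! hout
  have hmem (i : HalfEdge (Fin n)) : Sum.map h₀ h₁ i ∈ R ↔ edge i ∈ S :=
    ⟨fun hi => by_contra fun hiS => hout i hiS hi, hS i⟩
  have hsub (x : Fin n) (hx : cuckooConn n m h₀ h₁ (Sum.inl (h₀ x)) v) : x ∈ S :=
    (hmem (.inl x)).1 <|
      (hx.mem_iff_mem fun y => (hmem (.inl y)).trans (hmem (.inr y)).symm).2 hv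
  refine hlt.not_ge ?_
  rw [cuckooC, Nat.card_eq_fintype_card, Fintype.card_subtype]
  exact card_le_card fun x hx => hsub x (mem_filter.1 hx).2

theorem exists_explores_of_le_cuckooC {k : ℕ} (hk : k ≤ cuckooC n m h₀ h₁ v) :
    ∃ S : Finset (Fin n), #S = k ∧ ∃ p, Explores (Sum.map h₀ h₁) v S p := by
  induction k with
  | zero => exact ⟨∅, card_empty, _, explores_empty _ v⟩
  | succ k ih =>
    obtain ⟨S, hcard, p, hp⟩ := ih (Nat.le_of_succ_le hk)
    obtain ⟨i, hi, hfi⟩ := exists_halfEdge_of_card_lt_cuckooC (Or.inl rfl)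
      (fun _ => hp.mem_discovered) (hcard ▸ hk)
    exact ⟨insert (edge i) S, by rw [card_insert_of_notMem hi, hcard], hp.exists_insert hi hfi⟩

theorem card_le_cuckooC_mul_pow_le (v : Fin m ⊕ Fin m) (k : ℕ) :
    Nat.card {ω : HashPair n m // k ≤ cuckooC n m ω.1 ω.2 v} * m ^ k
      ≤ n.choose k * k ^ k * Nat.card (HashPair n m) := by
  let shapes := (powersetCard k (univ : Finset (Fin n))).sigma parentMaps
  let explored (s : Σ _ : Finset (Fin n), Fin n → Option (Fin n)) : Finset (HashPair n m) :=
    {ω | Explores (Sum.map ω.1 ω.2) v s.1 s.2}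
  have hcover : ({ω | k ≤ cuckooC n m ω.1 ω.2 v} : Finset (HashPair n m))
      ⊆ shapes.biUnion explored := by
    intro ω hω
    obtain ⟨S, hS, p, hp⟩ := exists_explores_of_le_cuckooC (mem_filter.1 hω).2
    exact mem_biUnion.2 ⟨⟨S, p⟩,
      mem_sigma.2 ⟨mem_powersetCard_univ.2 hS, hp.parentMap_mem⟩, by simpa [explored] using hp⟩
  have hshapes : #shapes = n.choose k * k ^ k := by
    rw [card_sigma, sum_congr rfl fun S hS => by
      rw [card_parentMaps, mem_powersetCard_univ.1 hS], sum_const, card_powersetCard,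
      card_univ, Fintype.card_fin, smul_eq_mul]
  have hexplored (s) (hs : s ∈ shapes) : #(explored s) * m ^ k ≤ Nat.card (HashPair n m) := by
    rw [← mem_powersetCard_univ.1 (mem_sigma.1 hs).1, Nat.card_eq_fintype_card]
    simpa only [Fintype.card_fin] using card_explores_mul_pow_le v s.1 s.2
  rw [Nat.card_eq_fintype_card, Fintype.card_subtype]
  calc #{ω : HashPair n m | k ≤ cuckooC n m ω.1 ω.2 v} * m ^ k
      ≤ (∑ s ∈ shapes, #(explored s)) * m ^ k := by
        gcongr
        exact (card_le_card hcover).trans card_biUnion_le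
    _ = ∑ s ∈ shapes, #(explored s) * m ^ k := sum_mul ..
    _ ≤ #shapes * Nat.card (HashPair n m) := sum_le_card_nsmul _ _ _ hexplored
    _ = n.choose k * k ^ k * Nat.card (HashPair n m) := by rw [hshapes]

theorem cuckooPr_le_cuckooC_le (v : Fin m ⊕ Fin m) (k : ℕ) :
    cuckooPr n m (fun ω => k ≤ cuckooC n m ω.1 ω.2 v) ≤ (n.choose k : ℝ) * k ^ k / m ^ k := by
  have hm : 0 < m := Fin.pos (v.elim id id)
  have : NeZero m := ⟨hm.ne'⟩
  have hcard : (0 : ℝ) < Nat.card (HashPair n m) := mod_cast Nat.card_pos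
  have hpow : (0 : ℝ) < (m : ℝ) ^ k := by positivity
  rw [cuckooPr, div_le_div_iff₀ hcard hpow]
  exact_mod_cast card_le_cuckooC_mul_pow_le v k

end CuckooGraph

/-- Lemma (Lemma 1 of the paper): for any vertex `v` of the random cuckoo graph with `n`
edges on parts of size `m`, and any `k ≥ 1`,
`Pr(C(v) ≥ k) ≤ (n·k/m)^k · (1/k!)`. -/
theorem cuckoo_component_size_bound (n m : ℕ) (hn : 0 < n) (hm : 0 < m)
    (v : Fin m ⊕ Fin m) (k : ℕ) (hk : 1 ≤ k) :
    cuckooPr n m (fun ω => k ≤ cuckooC n m ω.1 ω.2 v)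
      ≤ ((n : ℝ) * k / m) ^ k * (1 / (Nat.factorial k : ℝ)) := by
  calc cuckooPr n m (fun ω => k ≤ cuckooC n m ω.1 ω.2 v)
      ≤ (n.choose k : ℝ) * k ^ k / m ^ k := cuckooPr_le_cuckooC_le v k
    _ ≤ (n : ℝ) ^ k / k.factorial * k ^ k / m ^ k := by
        gcongr
        exact Nat.choose_le_pow_div k n
    _ = ((n : ℝ) * k / m) ^ k * (1 / (Nat.factorial k : ℝ)) := by
        rw [div_pow, mul_pow]
        ring
end

section
/- Let ε > 0 be a constant and suppose (1+ε)·n ≤ m. Then for every vertex v of the random cuckoo graph with n edges on parts of size m, and all natural numbers t ≥ 1 and k ≥ 1 such that Pr(C(v) = k) > 0, the conditional probability satisfies Pr(B_v ≥ t | C(v) = k) ≤ (3·e⁵·k³/m)^t. -/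
open Classical

/-!
Write `F t` for the set of hash pairs with `B_v ≥ t` and `C(v) = k`; it suffices to bound
`#(F (t + 1)) / #(F t)`. If `ω ∈ F (t + 1)`, the component of `v` has at most `k` vertices, so it
contains an edge `x` outside a spanning tree. Moving the left endpoint of `x` to an isolated left
vertex `u` adds the vertex `u` to the component and lowers `B_v` by one. The result lies in `F t`,
and `ω` is recovered from it, `u` and the old endpoint of `x`, two of the at most `k` left vertices
of the new component. So there are at most `k² #(F t)` pairs `(ω, u)` with `u` isolated.

Conversely, given the component of `v`, the left endpoints of the `n - k` remaining edges are
uniform outside it, so a fixed `u` outside the component is isolated with conditional probability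
at least `e^(-2n/m)` once `2k ≤ m`. Since at least `m - k ≥ m / 2` vertices `u` are available,
`#(F (t + 1)) ≤ (2 e^(2n/m) k² / m) #(F t)`, which is trivial when `m < 2k`.
-/

namespace Cuckoo

open Finset Function

section General

lemma eq_of_update_eq_update {α β : Type*} [DecidableEq α] {f g : α → β} {x y : α} {u : β}
    (hg : ∀ a, g a ≠ u) (h : update f x u = update g y u)
    (hxy : f x = g y) : f = g := by
  have hyx : x = y := by
    by_contra hne
    have := congrFun h x
    rw [update_self, update_of_ne hne] at this
    exact hg x this.symm
  subst hyx
  calc f = update (update f x u) x (f x) := by simp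
    _ = update (update g x u) x (g x) := by rw [h, hxy]
    _ = g := by simp

lemma card_le_mul_card_of_fiber_le {α β R : Type*} [DecidableEq β] [Semiring R] [PartialOrder R]
    [IsOrderedAddMonoid R] {s s' : Finset α} (hs : s' ⊆ s) (f : α → β) (c : R)
    (h : ∀ a ∈ s, (#{b ∈ s | f b = f a} : R) ≤ c * #{b ∈ s' | f b = f a}) :
    (#s : R) ≤ c * #s' := by
  have hs' : #s' = ∑ b ∈ s.image f, #{a ∈ s' | f a = b} :=
    card_eq_sum_card_fiberwise fun a ha => mem_image_of_mem f (hs ha)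
  rw [card_eq_sum_card_image f s, hs']
  push_cast
  rw [mul_sum]
  refine sum_le_sum fun b hb => ?_
  obtain ⟨a, ha, rfl⟩ := mem_image.1 hb
  exact h a ha

lemma add_one_pow_le_exp_mul_pow {r : ℝ} (hr : 0 < r) (s : ℕ) :
    (r + 1) ^ s ≤ Real.exp (s / r) * r ^ s := by
  have h : r + 1 ≤ Real.exp (1 / r) * r := by
    calc r + 1 = (1 / r + 1) * r := by field_simp; ring
      _ ≤ Real.exp (1 / r) * r := by gcongr; exact Real.add_one_le_exp _
  calc (r + 1) ^ s ≤ (Real.exp (1 / r) * r) ^ s := by gcongr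
    _ = Real.exp (s / r) * r ^ s := by rw [mul_pow, ← Real.exp_nat_mul, mul_one_div]

lemma two_mul_exp_load_mul_sq_le {n m k : ℕ} (hnm : n ≤ m) (hk : 1 ≤ k) :
    2 * Real.exp (2 * n / m) * k ^ 2 / m ≤ 3 * Real.exp 1 ^ 5 * (k : ℝ) ^ 3 / m := by
  have hload : (2 * n / m : ℝ) ≤ 5 := by
    rw [mul_div_assoc]
    linarith [div_le_one_of_le₀ (Nat.cast_le (α := ℝ).2 hnm) m.cast_nonneg]
  have hexp : Real.exp (2 * n / m) ≤ Real.exp 1 ^ 5 := by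
    rw [← Real.exp_nat_mul, mul_one]
    exact Real.exp_le_exp.2 hload
  have hk' : (1 : ℝ) ≤ k := by exact_mod_cast hk
  gcongr <;> norm_num

end General

section Multigraph

variable {ι V : Type*} {s s' t : ι → V} {T T' : Set ι} {a b u v : V} {x : ι}

/-- Connectivity in the multigraph on `V` with one edge from `s x` to `t x` for each `x : ι`, using
only the edges in `T`. Sets of edges are sets of indices, so that parallel edges are told apart. -/
def JoinedVia (s t : ι → V) (T : Set ι) : V → V → Prop :=
  Relation.EqvGen fun a b => ∃ x ∈ T, a = s x ∧ b = t x

namespace JoinedVia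

lemma refl (v : V) : JoinedVia s t T v v := Relation.EqvGen.refl v

lemma symm (h : JoinedVia s t T a b) : JoinedVia s t T b a := Relation.EqvGen.symm _ _ h

lemma trans (hab : JoinedVia s t T a b) (hbu : JoinedVia s t T b u) : JoinedVia s t T a u :=
  Relation.EqvGen.trans _ _ _ hab hbu

lemma edge (hx : x ∈ T) : JoinedVia s t T (s x) (t x) :=
  Relation.EqvGen.rel _ _ ⟨x, hx, rfl, rfl⟩

lemma edge_iff (hx : x ∈ T) : JoinedVia s t T (s x) v ↔ JoinedVia s t T (t x) v :=
  ⟨(edge hx).symm.trans, (edge hx).trans⟩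

lemma mono_of_eqOn (hT : T ⊆ T') (hs : Set.EqOn s s' T) (h : JoinedVia s t T a b) :
    JoinedVia s' t T' a b := by
  refine Relation.EqvGen.mono ?_ _ _ h
  rintro a b ⟨x, hx, rfl, rfl⟩
  exact ⟨x, hT hx, hs hx, rfl⟩

lemma mono (hT : T ⊆ T') (h : JoinedVia s t T a b) : JoinedVia s t T' a b :=
  h.mono_of_eqOn hT fun _ _ => rfl

lemma mem_iff_mem {K : Set V} (hK : ∀ x ∈ T, s x ∈ K ↔ t x ∈ K) (h : JoinedVia s t T a b) :
    a ∈ K ↔ b ∈ K := by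
  induction h with
  | rel a b h => obtain ⟨x, hx, rfl, rfl⟩ := h; exact hK x hx
  | refl => rfl
  | symm _ _ _ ih => exact ih.symm
  | trans _ _ _ _ _ ih ih' => exact ih.trans ih'

lemma restrict (h : JoinedVia s t T u v) :
    JoinedVia s t {x ∈ T | JoinedVia s t T (s x) v} u v := by
  set E := {x ∈ T | JoinedVia s t T (s x) v}
  have hET : E ⊆ T := Set.sep_subset _ _
  have hclosed : ∀ x ∈ T, JoinedVia s t E (s x) v ↔ JoinedVia s t E (t x) v := fun x hx =>
    ⟨fun hxv => (edge_iff (T := E) ⟨hx, hxv.mono hET⟩).1 hxv,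
      fun hxv => (edge_iff (T := E) ⟨hx, (edge_iff hx).2 (hxv.mono hET)⟩).2 hxv⟩
  exact (mem_iff_mem (K := {w | JoinedVia s t E w v}) hclosed h).2 (refl v)

end JoinedVia

open JoinedVia

/- A set of edges that is maximal among those with fewer edges than vertices joined to `v` spans
the component of `v`: any edge leaving the part reached so far could be added. -/
lemma exists_finset_card_lt_forall_joinedVia [Finite ι] [Fintype V] (s t : ι → V) (v : V) :
    ∃ T : Finset ι, #T < #{u | JoinedVia s t Set.univ u v} ∧
      ∀ u, JoinedVia s t Set.univ u v → JoinedVia s t T u v := by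
  obtain ⟨T, hT, hmax⟩ :=
    (Set.toFinite {T : Finset ι | #T < #{u | JoinedVia s t T u v}}).exists_maximal
      ⟨∅, card_pos.2 ⟨v, by simpa using JoinedVia.refl v⟩⟩
  have hclosed : ∀ x, JoinedVia s t T (s x) v ↔ JoinedVia s t T (t x) v := by
    intro x
    by_contra hx
    have hxT : x ∉ T := fun h => hx (edge_iff (mem_coe.2 h))
    have hsub : (T : Set ι) ⊆ ↑(insert x T) := coe_subset.2 (subset_insert x T)
    have hgrow : #{u | JoinedVia s t T u v} < #{u | JoinedVia s t ↑(insert x T) u v} := by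
      refine card_lt_card ⟨monotone_filter_right _ fun u _ hu => hu.mono hsub, fun hle => hx ?_⟩
      have hback : ∀ u, JoinedVia s t ↑(insert x T) u v ↔ JoinedVia s t T u v := fun u =>
        ⟨fun hu => by simpa using hle (by simpa using hu), fun hu => hu.mono hsub⟩
      rw [← hback, ← hback]
      exact edge_iff (by simp)
    have hinsert : #(insert x T) < #{u | JoinedVia s t ↑(insert x T) u v} := by
      rw [card_insert_of_notMem hxT]
      exact (Nat.succ_le_of_lt hT).trans_lt hgrow
    exact hxT (hmax hinsert (subset_insert x T) (mem_insert_self x T))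
  refine ⟨T, hT.trans_le ?_, fun u hu => ?_⟩
  · exact card_le_card (monotone_filter_right _ fun u _ hu => hu.mono (Set.subset_univ _))
  · exact (mem_iff_mem (K := {w | JoinedVia s t T w v}) (fun x _ => hclosed x) hu).2 (.refl v)

lemma exists_joinedVia_compl_singleton [Fintype ι] [Fintype V]
    (h : #{u | JoinedVia s t Set.univ u v} ≤ #{x | JoinedVia s t Set.univ (s x) v}) :
    ∃ x, JoinedVia s t Set.univ (s x) v ∧
      ∀ u, JoinedVia s t Set.univ u v → JoinedVia s t {x}ᶜ u v := by
  obtain ⟨T, hT, hspan⟩ := exists_finset_card_lt_forall_joinedVia s t v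
  obtain ⟨x, hx, hxT⟩ := exists_mem_notMem_of_card_lt_card (hT.trans_le h)
  exact ⟨x, by simpa using hx, fun u hu => (hspan u hu).mono (by simpa using hxT)⟩

end Multigraph

section Component

variable {n m : ℕ} {h₀ h₁ g₀ : Fin n → Fin m} {v : Fin m ⊕ Fin m}

lemma cuckooConn_iff_joinedVia {a b : Fin m ⊕ Fin m} :
    cuckooConn n m h₀ h₁ a b ↔ JoinedVia (Sum.inl ∘ h₀) (Sum.inr ∘ h₁) Set.univ a b := by
  unfold cuckooConn cuckooAdj JoinedVia
  simp only [Set.mem_univ, true_and, comp_apply]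

/-- The vertex set of the connected component of `v` in the cuckoo graph. -/
noncomputable def component (h₀ h₁ : Fin n → Fin m) (v : Fin m ⊕ Fin m) :
    Finset (Fin m ⊕ Fin m) :=
  {u | JoinedVia (Sum.inl ∘ h₀) (Sum.inr ∘ h₁) Set.univ u v}

/-- The left part of the vertex set of the component of `v`. -/
noncomputable def componentLeft (h₀ h₁ : Fin n → Fin m) (v : Fin m ⊕ Fin m) : Finset (Fin m) :=
  {a | Sum.inl a ∈ component h₀ h₁ v}

/-- The items whose edges lie in the component of `v`. -/
noncomputable def componentItems (h₀ h₁ : Fin n → Fin m) (v : Fin m ⊕ Fin m) : Finset (Fin n) :=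
  {x | h₀ x ∈ componentLeft h₀ h₁ v}

lemma mem_component {u : Fin m ⊕ Fin m} : u ∈ component h₀ h₁ v ↔
    JoinedVia (Sum.inl ∘ h₀) (Sum.inr ∘ h₁) Set.univ u v := by
  simp [component]

lemma mem_componentLeft {a : Fin m} :
    a ∈ componentLeft h₀ h₁ v ↔ Sum.inl a ∈ component h₀ h₁ v := by
  simp [componentLeft]

lemma mem_componentItems {x : Fin n} :
    x ∈ componentItems h₀ h₁ v ↔ Sum.inl (h₀ x) ∈ component h₀ h₁ v := by
  simp [componentItems, mem_componentLeft]

lemma mem_componentItems_iff_inr {x : Fin n} :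
    x ∈ componentItems h₀ h₁ v ↔ Sum.inr (h₁ x) ∈ component h₀ h₁ v := by
  rw [mem_componentItems, mem_component, mem_component]
  exact JoinedVia.edge_iff (s := Sum.inl ∘ h₀) (t := Sum.inr ∘ h₁) (Set.mem_univ x)

lemma cuckooV_eq_card : cuckooV n m h₀ h₁ v = #(component h₀ h₁ v) := by
  rw [cuckooV, Nat.card_eq_fintype_card, Fintype.card_subtype]
  simp only [cuckooConn_iff_joinedVia, component]

lemma cuckooC_eq_card : cuckooC n m h₀ h₁ v = #(componentItems h₀ h₁ v) := by
  rw [cuckooC, Nat.card_eq_fintype_card, Fintype.card_subtype]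
  congr 1
  ext x
  simp [cuckooConn_iff_joinedVia, mem_componentItems, mem_component]

lemma cuckooB_eq_card : cuckooB n m h₀ h₁ v =
    #(componentItems h₀ h₁ v) + 1 - #(component h₀ h₁ v) := by
  rw [cuckooB, cuckooC_eq_card, cuckooV_eq_card]

lemma self_mem_component : v ∈ component h₀ h₁ v := mem_component.2 (JoinedVia.refl v)

lemma componentItems_eq_of_component_eq
    (h : component g₀ h₁ v = component h₀ h₁ v) :
    componentItems g₀ h₁ v = componentItems h₀ h₁ v := by
  ext x
  rw [mem_componentItems_iff_inr, mem_componentItems_iff_inr, h]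

lemma component_eq {K : Finset (Fin m ⊕ Fin m)} (hv : v ∈ K)
    (hclosed : ∀ x, Sum.inl (h₀ x) ∈ K ↔ Sum.inr (h₁ x) ∈ K)
    (hconn : ∀ u ∈ K, JoinedVia (Sum.inl ∘ h₀) (Sum.inr ∘ h₁) Set.univ u v) :
    component h₀ h₁ v = K := by
  ext u
  rw [mem_component]
  refine ⟨fun hu => ?_, hconn u⟩
  exact (JoinedVia.mem_iff_mem (K := (K : Set _)) (fun x _ => hclosed x) hu).2 hv

lemma card_componentLeft_lt (h : (componentItems h₀ h₁ v).Nonempty) :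
    #(componentLeft h₀ h₁ v) < #(component h₀ h₁ v) := by
  obtain ⟨x, hx⟩ := h
  rw [← card_map Embedding.inl]
  refine card_lt_card ⟨fun u hu => ?_, fun hle => ?_⟩
  · obtain ⟨a, ha, rfl⟩ := mem_map.1 hu
    exact mem_componentLeft.1 ha
  · simpa using hle (mem_componentItems_iff_inr.1 hx)

lemma component_rehash (hin : ∀ x ∈ componentItems h₀ h₁ v, g₀ x = h₀ x)
    (hout : ∀ x ∉ componentItems h₀ h₁ v, g₀ x ∉ componentLeft h₀ h₁ v) :
    component g₀ h₁ v = component h₀ h₁ v := by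
  refine component_eq self_mem_component (fun x => ?_) fun u hu => ?_
  · rw [← mem_componentItems_iff_inr, ← mem_componentLeft]
    by_cases hx : x ∈ componentItems h₀ h₁ v
    · rw [hin x hx, mem_componentLeft, ← mem_componentItems]
    · exact iff_of_false (hout x hx) hx
  · refine (mem_component.1 hu).restrict.mono_of_eqOn (Set.subset_univ _) fun x hx => ?_
    exact congrArg Sum.inl (hin x (mem_componentItems.2 (mem_component.2 hx.2))).symm

end Component

section Switching

variable {n m : ℕ} {h₀ h₁ : Fin n → Fin m} {v : Fin m ⊕ Fin m} {x : Fin n} {u : Fin m}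

lemma component_update (hx : x ∈ componentItems h₀ h₁ v)
    (hconn : ∀ w ∈ component h₀ h₁ v, JoinedVia (Sum.inl ∘ h₀) (Sum.inr ∘ h₁) {x}ᶜ w v)
    (hu : ∀ y, h₀ y ≠ u) :
    component (update h₀ x u) h₁ v = insert (Sum.inl u) (component h₀ h₁ v) := by
  have hconn' : ∀ w ∈ component h₀ h₁ v,
      JoinedVia (Sum.inl ∘ update h₀ x u) (Sum.inr ∘ h₁) Set.univ w v := fun w hw =>
    (hconn w hw).mono_of_eqOn (Set.subset_univ _) fun y hy => by
      rw [comp_apply, comp_apply, update_of_ne hy]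
  refine component_eq (mem_insert_of_mem self_mem_component) (fun y => ?_) fun w hw => ?_
  · obtain rfl | hy := eq_or_ne y x
    · simpa using mem_componentItems_iff_inr.1 hx
    · simp [hy, hu y, ← mem_componentItems, ← mem_componentItems_iff_inr]
  · obtain rfl | hw := mem_insert.1 hw
    · refine JoinedVia.trans ?_ (hconn' _ (mem_componentItems_iff_inr.1 hx))
      simpa using JoinedVia.edge (s := Sum.inl ∘ update h₀ x u) (t := Sum.inr ∘ h₁)
        (Set.mem_univ x)
    · exact hconn' w hw

lemma componentItems_update
    (hcomp : component (update h₀ x u) h₁ v = insert (Sum.inl u) (component h₀ h₁ v)) :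
    componentItems (update h₀ x u) h₁ v = componentItems h₀ h₁ v := by
  ext y
  rw [mem_componentItems_iff_inr, mem_componentItems_iff_inr, hcomp]
  simp

lemma componentLeft_update
    (hcomp : component (update h₀ x u) h₁ v = insert (Sum.inl u) (component h₀ h₁ v)) :
    componentLeft (update h₀ x u) h₁ v = insert u (componentLeft h₀ h₁ v) := by
  ext a
  simp [mem_componentLeft, hcomp]

end Switching

section Event

variable {n m : ℕ} {h₀ h₁ : Fin n → Fin m} {v : Fin m ⊕ Fin m} {t k : ℕ}
  {ω : HashPair n m}

/-- The event that `B_v ≥ t` and `C(v) = k`, as a set of hash pairs. -/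
noncomputable def cyclotomicEvent (n : ℕ) (v : Fin m ⊕ Fin m) (t k : ℕ) :
    Finset (HashPair n m) :=
  {ω | t ≤ cuckooB n m ω.1 ω.2 v ∧ cuckooC n m ω.1 ω.2 v = k}

lemma mem_cyclotomicEvent : ω ∈ cyclotomicEvent n v t k ↔
    t ≤ k + 1 - #(component ω.1 ω.2 v) ∧ #(componentItems ω.1 ω.2 v) = k := by
  simp only [cyclotomicEvent, mem_filter_univ, cuckooC_eq_card, cuckooB_eq_card]
  exact and_congr_left fun h => by rw [h]

lemma cyclotomicEvent_succ_subset :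
    cyclotomicEvent n v (t + 1) k ⊆ cyclotomicEvent n v t k := fun ω hω => by
  rw [mem_cyclotomicEvent] at hω ⊢
  exact ⟨by omega, hω.2⟩

lemma card_component_le_of_mem (hω : ω ∈ cyclotomicEvent n v (t + 1) k) :
    #(component ω.1 ω.2 v) ≤ k := by
  have := (mem_cyclotomicEvent.1 hω).1
  omega

lemma card_componentLeft_lt_of_mem (hω : ω ∈ cyclotomicEvent n v (t + 1) k) :
    #(componentLeft ω.1 ω.2 v) < k := by
  have hpos : 0 < #(component ω.1 ω.2 v) := card_pos.2 ⟨v, self_mem_component⟩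
  have hitems : (componentItems ω.1 ω.2 v).Nonempty := by
    rw [← card_pos, (mem_cyclotomicEvent.1 hω).2]
    exact hpos.trans_le (card_component_le_of_mem hω)
  exact (card_componentLeft_lt hitems).trans_le (card_component_le_of_mem hω)

lemma exists_nonbridge_of_mem (hω : ω ∈ cyclotomicEvent n v (t + 1) k) :
    ∃ x ∈ componentItems ω.1 ω.2 v, ∀ w ∈ component ω.1 ω.2 v,
      JoinedVia (Sum.inl ∘ ω.1) (Sum.inr ∘ ω.2) {x}ᶜ w v := by
  have hle : #(component ω.1 ω.2 v) ≤ #(componentItems ω.1 ω.2 v) :=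
    (card_component_le_of_mem hω).trans_eq (mem_cyclotomicEvent.1 hω).2.symm
  simp only [mem_componentItems, mem_component]
  refine exists_joinedVia_compl_singleton (s := Sum.inl ∘ ω.1) (t := Sum.inr ∘ ω.2)
    (hle.trans_eq (congrArg card ?_))
  ext x
  simp [mem_componentItems, mem_component]

lemma update_mem_cyclotomicEvent {x : Fin n} {u : Fin m}
    (hω : (h₀, h₁) ∈ cyclotomicEvent n v (t + 1) k) (hu : u ∉ componentLeft h₀ h₁ v)
    (hcomp : component (update h₀ x u) h₁ v = insert (Sum.inl u) (component h₀ h₁ v)) :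
    (update h₀ x u, h₁) ∈ cyclotomicEvent n v t k := by
  have hcard : #(component (update h₀ x u) h₁ v) = #(component h₀ h₁ v) + 1 := by
    rw [hcomp, card_insert_of_notMem (mt mem_componentLeft.2 hu)]
  rw [mem_cyclotomicEvent] at hω ⊢
  refine ⟨?_, by rw [componentItems_update hcomp]; exact hω.2⟩
  simp only [hcard] at hω ⊢
  omega

/-- The part of `cyclotomicEvent n v t k` where the left vertex `u` is not joined to `v`. -/
noncomputable def avoidingEvent (n : ℕ) (v : Fin m ⊕ Fin m) (t k : ℕ) (u : Fin m) :
    Finset (HashPair n m) :=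
  {ω ∈ cyclotomicEvent n v t k | u ∉ componentLeft ω.1 ω.2 v}

/-- The part of `avoidingEvent n v t k u` where the left vertex `u` has no edge. -/
noncomputable def isolatingEvent (n : ℕ) (v : Fin m ⊕ Fin m) (t k : ℕ) (u : Fin m) :
    Finset (HashPair n m) :=
  {ω ∈ avoidingEvent n v t k u | ∀ y, ω.1 y ≠ u}

lemma mem_avoidingEvent {u : Fin m} : ω ∈ avoidingEvent n v t k u ↔
    ω ∈ cyclotomicEvent n v t k ∧ u ∉ componentLeft ω.1 ω.2 v := mem_filter

lemma mem_isolatingEvent {u : Fin m} : ω ∈ isolatingEvent n v t k u ↔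
    ω ∈ avoidingEvent n v t k u ∧ ∀ y, ω.1 y ≠ u := mem_filter

lemma isolatingEvent_subset {u : Fin m} :
    isolatingEvent n v t k u ⊆ avoidingEvent n v t k u := filter_subset _ _

lemma exists_switching {u : Fin m} (hω : (h₀, h₁) ∈ isolatingEvent n v (t + 1) k u) :
    ∃ x, (update h₀ x u, h₁) ∈ cyclotomicEvent n v t k ∧
      #(componentLeft (update h₀ x u) h₁ v) ≤ k ∧
      u ∈ componentLeft (update h₀ x u) h₁ v ∧ h₀ x ∈ componentLeft (update h₀ x u) h₁ v := by
  obtain ⟨hav, hiso⟩ := mem_isolatingEvent.1 hω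
  obtain ⟨hcyc, hu⟩ := mem_avoidingEvent.1 hav
  obtain ⟨x, hx, hconn⟩ := exists_nonbridge_of_mem hcyc
  have hcomp := component_update hx hconn hiso
  refine ⟨x, update_mem_cyclotomicEvent hcyc hu hcomp, ?_⟩
  rw [componentLeft_update hcomp]
  refine ⟨(card_insert_le _ _).trans (card_componentLeft_lt_of_mem hcyc), mem_insert_self _ _,
    mem_insert_of_mem ?_⟩
  exact mem_componentLeft.2 (mem_componentItems.1 hx)

lemma sum_card_isolatingEvent_le (n : ℕ) (v : Fin m ⊕ Fin m) (t k : ℕ) :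
    ∑ u, #(isolatingEvent n v (t + 1) k u) ≤ k ^ 2 * #(cyclotomicEvent n v t k) := by
  let target : Finset (Σ _ : HashPair n m, Fin m × Fin m) :=
    {ω ∈ cyclotomicEvent n v t k | #(componentLeft ω.1 ω.2 v) ≤ k}.sigma
      fun ω => componentLeft ω.1 ω.2 v ×ˢ componentLeft ω.1 ω.2 v
  have htarget : #target ≤ k ^ 2 * #(cyclotomicEvent n v t k) := by
    rw [card_sigma, mul_comm]
    refine (sum_le_card_nsmul _ _ (k ^ 2) fun ω hω => ?_).trans
      (Nat.mul_le_mul_right _ (card_filter_le _ _))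
    have hleft := (mem_filter.1 hω).2
    rw [card_product, sq]
    exact Nat.mul_le_mul hleft hleft
  refine le_trans ?_ htarget
  rw [← card_sigma]
  refine card_le_card_of_forall_subsingleton
    (fun p q => ∃ x, q = ⟨(update p.2.1 x p.1, p.2.2), (p.1, p.2.1 x)⟩) ?_ ?_
  · rintro ⟨u, h₀, h₁⟩ hp
    obtain ⟨x, hcyc, hcard, hu, hx⟩ := exists_switching (mem_sigma.1 hp).2
    refine ⟨⟨(update h₀ x u, h₁), (u, h₀ x)⟩, ?_, x, rfl⟩
    simp only [target, mem_sigma, mem_filter, mem_product]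
    exact ⟨⟨hcyc, hcard⟩, hu, hx⟩
  · rintro _ - ⟨u, h₀, h₁⟩ ⟨-, x, rfl⟩ ⟨u', g₀, g₁⟩ ⟨hq, y, h⟩
    simp only [Sigma.mk.injEq, Prod.mk.injEq, heq_eq_eq] at h
    obtain ⟨⟨hupd, rfl⟩, rfl, hxy⟩ := h
    have hiso := (mem_isolatingEvent.1 (mem_sigma.1 hq).2).2
    rw [eq_of_update_eq_update hiso hupd hxy]

end Event

section Exposure

variable {n m : ℕ} {h₀ h₁ g₀ g₁ : Fin n → Fin m} {v : Fin m ⊕ Fin m} {t k : ℕ}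
  {ω ω' : HashPair n m} {D : Finset (Fin m)}

/-- The data revealed by exploring the component of `v` and all of `h₁`: the component, `h₁`, and
the values of `h₀` on the items of the component (`none` elsewhere). -/
noncomputable def exposure (v : Fin m ⊕ Fin m) (ω : HashPair n m) :
    Finset (Fin m ⊕ Fin m) × (Fin n → Fin m) × (Fin n → Option (Fin m)) :=
  (component ω.1 ω.2 v, ω.2, fun x => if x ∈ componentItems ω.1 ω.2 v then some (ω.1 x) else none)

/-- The left hash functions that agree with `h₀` on the component of `v` and send all other items
to `D`. -/
noncomputable def rehashings (h₀ h₁ : Fin n → Fin m) (v : Fin m ⊕ Fin m) (D : Finset (Fin m)) :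
    Finset (Fin n → Fin m) :=
  Fintype.piFinset fun x => if x ∈ componentItems h₀ h₁ v then {h₀ x} else D

lemma mem_rehashings : g₀ ∈ rehashings h₀ h₁ v D ↔
    (∀ x ∈ componentItems h₀ h₁ v, g₀ x = h₀ x) ∧ ∀ x ∉ componentItems h₀ h₁ v, g₀ x ∈ D := by
  simp only [rehashings, Fintype.mem_piFinset, ← forall_and]
  refine forall_congr' fun x => ?_
  by_cases hx : x ∈ componentItems h₀ h₁ v <;> simp [hx]

lemma card_rehashings :
    #(rehashings h₀ h₁ v D) = #D ^ (n - #(componentItems h₀ h₁ v)) := by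
  have hcard : ∀ x, #(if x ∈ componentItems h₀ h₁ v then {h₀ x} else D) =
      if x ∈ componentItems h₀ h₁ v then 1 else #D := fun x => by split_ifs <;> simp
  simp only [rehashings, Fintype.card_piFinset, hcard, prod_ite, prod_const_one, one_mul,
    prod_const]
  rw [filter_not, filter_mem_eq_inter, univ_inter, ← compl_eq_univ_sdiff, card_compl,
    Fintype.card_fin]

lemma exposure_eq_iff : exposure v (g₀, g₁) = exposure v (h₀, h₁) ↔
    g₁ = h₁ ∧ g₀ ∈ rehashings h₀ h₁ v (componentLeft h₀ h₁ v)ᶜ := by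
  simp only [exposure, Prod.mk.injEq, mem_rehashings, mem_compl]
  constructor
  · rintro ⟨hcomp, rfl, hval⟩
    have hitems := componentItems_eq_of_component_eq hcomp
    refine ⟨rfl, fun x hx => ?_, fun x hx => ?_⟩
    · simpa [hitems, hx] using congrFun hval x
    · rwa [← hitems, mem_componentItems, hcomp, ← mem_componentLeft] at hx
  · rintro ⟨rfl, hin, hout⟩
    have hcomp := component_rehash hin hout
    refine ⟨hcomp, rfl, funext fun x => ?_⟩
    rw [componentItems_eq_of_component_eq hcomp]
    split_ifs with hx
    · rw [hin x hx]
    · rfl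

lemma mem_avoidingEvent_of_exposure_eq {u : Fin m} (h : exposure v ω' = exposure v ω)
    (hω : ω ∈ avoidingEvent n v t k u) : ω' ∈ avoidingEvent n v t k u := by
  obtain ⟨g₀, g₁⟩ := ω'
  obtain ⟨h₀, h₁⟩ := ω
  obtain rfl : g₁ = h₁ := (exposure_eq_iff.1 h).1
  have hcomp : component g₀ g₁ v = component h₀ g₁ v := congrArg Prod.fst h
  have hitems := componentItems_eq_of_component_eq hcomp
  rw [mem_avoidingEvent, mem_cyclotomicEvent, mem_componentLeft] at hω ⊢
  simpa only [hcomp, hitems] using hω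

lemma card_filter_exposure_eq_le (S : Finset (HashPair n m)) :
    #{ω ∈ S | exposure v ω = exposure v (h₀, h₁)} ≤
      #(componentLeft h₀ h₁ v)ᶜ ^ (n - #(componentItems h₀ h₁ v)) := by
  rw [← card_rehashings (h₁ := h₁)]
  refine card_le_card_of_injOn Prod.fst ?_ ?_
  · rintro ⟨g₀, g₁⟩ hg
    exact (exposure_eq_iff.1 (mem_filter.1 hg).2).2
  · rintro ⟨g₀, g₁⟩ hg ⟨_, g₁'⟩ hg' rfl
    rw [(exposure_eq_iff.1 (mem_filter.1 hg).2).1, (exposure_eq_iff.1 (mem_filter.1 hg').2).1]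

lemma le_card_filter_exposure_eq {u : Fin m} (hω : (h₀, h₁) ∈ avoidingEvent n v t k u) :
    #((componentLeft h₀ h₁ v)ᶜ.erase u) ^ (n - #(componentItems h₀ h₁ v)) ≤
      #{ω ∈ isolatingEvent n v t k u | exposure v ω = exposure v (h₀, h₁)} := by
  rw [← card_rehashings (h₁ := h₁)]
  refine card_le_card_of_injOn (fun g₀ => (g₀, h₁)) (fun g₀ hg => ?_)
    (Prod.mk_left_injective h₁).injOn
  obtain ⟨hin, hout⟩ := mem_rehashings.1 hg
  have hexp : exposure v (g₀, h₁) = exposure v (h₀, h₁) :=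
    exposure_eq_iff.2 ⟨rfl, mem_rehashings.2 ⟨hin, fun x hx => mem_of_mem_erase (hout x hx)⟩⟩
  refine mem_filter.2 ⟨mem_isolatingEvent.2 ⟨mem_avoidingEvent_of_exposure_eq hexp hω, ?_⟩, hexp⟩
  intro y
  by_cases hy : y ∈ componentItems h₀ h₁ v
  · rintro rfl
    refine (mem_avoidingEvent.1 hω).2 ?_
    change g₀ y ∈ componentLeft h₀ h₁ v
    rw [hin y hy]
    exact mem_componentLeft.2 (mem_componentItems.1 hy)
  · exact ne_of_mem_erase (hout y hy)

lemma card_avoidingEvent_le {u : Fin m} (hkm : 2 * k ≤ m) :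
    (#(avoidingEvent n v (t + 1) k u) : ℝ) ≤
      Real.exp (2 * n / m) * #(isolatingEvent n v (t + 1) k u) := by
  refine card_le_mul_card_of_fiber_le isolatingEvent_subset (exposure v) _ ?_
  rintro ⟨h₀, h₁⟩ hω
  obtain ⟨hcyc, hu⟩ := mem_avoidingEvent.1 hω
  have hm : (0 : ℝ) < m := Nat.cast_pos.2 (Fin.pos u)
  set r := #((componentLeft h₀ h₁ v)ᶜ.erase u)
  set d := n - #(componentItems h₀ h₁ v) with hd
  have hcompl : #(componentLeft h₀ h₁ v)ᶜ = r + 1 :=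
    (card_erase_add_one (mem_compl.2 hu)).symm
  have hmr : (m : ℝ) / 2 ≤ r := by
    have hleft := card_componentLeft_lt_of_mem hcyc
    dsimp only at hleft
    rw [card_compl, Fintype.card_fin] at hcompl
    have : m ≤ 2 * r := by omega
    have : (m : ℝ) ≤ 2 * r := by exact_mod_cast this
    linarith
  have hexp : (d : ℝ) / r ≤ 2 * n / m := by
    calc (d : ℝ) / r ≤ n / (m / 2) := by gcongr; exact Nat.sub_le _ _
      _ = 2 * n / m := by field_simp
  calc (#{ω ∈ avoidingEvent n v (t + 1) k u | exposure v ω = exposure v (h₀, h₁)} : ℝ)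
      ≤ ((r : ℝ) + 1) ^ d := by
        have hle := card_filter_exposure_eq_le (v := v) (h₀ := h₀) (h₁ := h₁)
          (avoidingEvent n v (t + 1) k u)
        rw [hcompl, ← hd] at hle
        exact_mod_cast hle
    _ ≤ Real.exp (d / r) * (r : ℝ) ^ d := add_one_pow_le_exp_mul_pow (by linarith) d
    _ ≤ Real.exp (2 * n / m) *
        #{ω ∈ isolatingEvent n v (t + 1) k u | exposure v ω = exposure v (h₀, h₁)} := by
      gcongr
      exact_mod_cast le_card_filter_exposure_eq hω

end Exposure

section Recursion

variable {m : ℕ}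

lemma sub_mul_card_le_sum_card_avoidingEvent (n : ℕ) (v : Fin m ⊕ Fin m) (t k : ℕ) :
    (m - k : ℝ) * #(cyclotomicEvent n v (t + 1) k) ≤
      ∑ u, (#(avoidingEvent n v (t + 1) k u) : ℝ) := by
  have hswap : ∑ u, #(avoidingEvent n v (t + 1) k u) =
      ∑ ω ∈ cyclotomicEvent n v (t + 1) k, #(componentLeft ω.1 ω.2 v)ᶜ := by
    have := sum_card_bipartiteAbove_eq_sum_card_bipartiteBelow (s := univ)
      (t := cyclotomicEvent n v (t + 1) k) fun u ω => u ∉ componentLeft ω.1 ω.2 v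
    simpa only [bipartiteAbove, bipartiteBelow, avoidingEvent, ← mem_compl, filter_univ_mem]
      using this
  rw [← Nat.cast_sum, hswap, Nat.cast_sum, mul_comm, ← nsmul_eq_mul]
  refine card_nsmul_le_sum _ _ _ fun ω hω => ?_
  have hleft : (#(componentLeft ω.1 ω.2 v) : ℝ) ≤ k := by
    exact_mod_cast (card_componentLeft_lt_of_mem hω).le
  rw [card_compl, Nat.cast_sub (card_le_univ _), Fintype.card_fin]
  linarith

lemma card_cyclotomicEvent_succ_le (n : ℕ) (v : Fin m ⊕ Fin m) (t k : ℕ) :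
    (#(cyclotomicEvent n v (t + 1) k) : ℝ) ≤
      2 * Real.exp (2 * n / m) * k ^ 2 / m * #(cyclotomicEvent n v t k) := by
  have hm : (0 : ℝ) < m := Nat.cast_pos.2 (v.elim Fin.pos Fin.pos)
  have hexp : 1 ≤ Real.exp (2 * n / m) := Real.one_le_exp (by positivity)
  obtain hkm | hkm := le_or_gt (2 * k) m
  · have hkm' : (2 * k : ℝ) ≤ m := by exact_mod_cast hkm
    have hswitch : (m - k : ℝ) * #(cyclotomicEvent n v (t + 1) k) ≤
        Real.exp (2 * n / m) * (k ^ 2 * #(cyclotomicEvent n v t k)) := by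
      calc (m - k : ℝ) * #(cyclotomicEvent n v (t + 1) k)
          ≤ ∑ u, (#(avoidingEvent n v (t + 1) k u) : ℝ) :=
            sub_mul_card_le_sum_card_avoidingEvent n v t k
        _ ≤ ∑ u, Real.exp (2 * n / m) * #(isolatingEvent n v (t + 1) k u) :=
            sum_le_sum fun u _ => card_avoidingEvent_le hkm
        _ ≤ Real.exp (2 * n / m) * (k ^ 2 * #(cyclotomicEvent n v t k)) := by
            rw [← mul_sum]
            gcongr
            exact_mod_cast sum_card_isolatingEvent_le n v t k
    have hhalf : (m / 2 : ℝ) * #(cyclotomicEvent n v (t + 1) k) ≤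
        (m - k) * #(cyclotomicEvent n v (t + 1) k) := by
      gcongr
      linarith
    rw [div_mul_eq_mul_div, le_div_iff₀ hm]
    linarith
  · have hk : 1 ≤ k := by omega
    have hratio : 1 ≤ 2 * Real.exp (2 * n / m) * k ^ 2 / m := by
      rw [one_le_div hm]
      calc (m : ℝ) ≤ 2 * 1 * k := by exact_mod_cast (by omega : m ≤ 2 * 1 * k)
        _ ≤ 2 * Real.exp (2 * n / m) * k ^ 2 := by
          gcongr
          exact le_self_pow₀ (by exact_mod_cast hk) two_ne_zero
    calc (#(cyclotomicEvent n v (t + 1) k) : ℝ) ≤ #(cyclotomicEvent n v t k) := by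
          exact_mod_cast card_le_card cyclotomicEvent_succ_subset
      _ ≤ _ := le_mul_of_one_le_left (Nat.cast_nonneg _) hratio

lemma card_cyclotomicEvent_le (n : ℕ) (v : Fin m ⊕ Fin m) (t k : ℕ) :
    (#(cyclotomicEvent n v t k) : ℝ) ≤
      (2 * Real.exp (2 * n / m) * k ^ 2 / m) ^ t * #(cyclotomicEvent n v 0 k) := by
  induction t with
  | zero => simp
  | succ t ih =>
    refine (card_cyclotomicEvent_succ_le n v t k).trans ?_
    rw [pow_succ' _ t, mul_assoc _ (_ ^ t)]
    gcongr

lemma cuckooPr_eq_card_div (n : ℕ) (v : Fin m ⊕ Fin m) (t k : ℕ) :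
    cuckooPr n m (fun ω => t ≤ cuckooB n m ω.1 ω.2 v ∧ cuckooC n m ω.1 ω.2 v = k) =
      #(cyclotomicEvent n v t k) / Nat.card (HashPair n m) := by
  rw [cuckooPr, Nat.card_eq_fintype_card, Fintype.card_subtype, cyclotomicEvent]

end Recursion

end Cuckoo

theorem cuckoo_cyclotomic_conditional_bound_general (n m : ℕ) (v : Fin m ⊕ Fin m) (t k : ℕ)
    (hpos : 0 < cuckooPr n m (fun ω => cuckooC n m ω.1 ω.2 v = k)) :
    cuckooPr n m (fun ω => t ≤ cuckooB n m ω.1 ω.2 v ∧ cuckooC n m ω.1 ω.2 v = k) /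
        cuckooPr n m (fun ω => cuckooC n m ω.1 ω.2 v = k)
      ≤ (2 * Real.exp (2 * n / m) * k ^ 2 / m) ^ t := by
  have hC := Cuckoo.cuckooPr_eq_card_div n v 0 k
  simp only [zero_le, true_and] at hC
  rw [div_le_iff₀ hpos, Cuckoo.cuckooPr_eq_card_div, hC, ← mul_div_assoc]
  gcongr
  exact Cuckoo.card_cyclotomicEvent_le n v t k

/-- Lemma (Kirsch–Mitzenmacher–Wieder): if `(1+ε)·n ≤ m` for a constant `ε > 0`, then for
every vertex `v` and all `t ≥ 1`, `k ≥ 1` with `Pr(C(v) = k) > 0`,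
`Pr(B_v ≥ t | C(v) = k) ≤ (3·e⁵·k³/m)^t`. -/
theorem cuckoo_cyclotomic_conditional_bound (ε : ℝ) (hε : 0 < ε) (n m : ℕ)
    (hn : 0 < n) (hm : 0 < m) (hnm : (1 + ε) * n ≤ m)
    (v : Fin m ⊕ Fin m) (t k : ℕ) (ht : 1 ≤ t) (hk : 1 ≤ k)
    (hpos : 0 < cuckooPr n m (fun ω => cuckooC n m ω.1 ω.2 v = k)) :
    cuckooPr n m (fun ω => t ≤ cuckooB n m ω.1 ω.2 v ∧ cuckooC n m ω.1 ω.2 v = k) /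
        cuckooPr n m (fun ω => cuckooC n m ω.1 ω.2 v = k)
      ≤ (3 * Real.exp 1 ^ 5 * (k : ℝ) ^ 3 / m) ^ t := by
  have hload : n ≤ m := by
    exact_mod_cast (le_mul_of_one_le_left n.cast_nonneg (by linarith : 1 ≤ 1 + ε)).trans hnm
  exact (cuckoo_cyclotomic_conditional_bound_general n m v t k hpos).trans
    (pow_le_pow_left₀ (by positivity) (Cuckoo.two_mul_exp_load_mul_sq_le hload hk) t)
end

section
/- There exist a constant c > 0 and a threshold m₀ such that the following holds for all m ≥ m₀. Let m' = ⌈m^{2/3}⌉ and let n' be a positive integer with n' ≤ 2·m^{1/3}. Then for the random cuckoo graph with n' edges on parts of size m', for every natural number k with 1 ≤ k ≤ m^{1/4} and every vertex v, Pr(C(v) ≥ k) ≤ m^{−c·k}. -/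
open Classical

/-!
If `C(v) ≥ k`, exploring the component of `v` one edge at a time yields `k` distinct items, each of
which is incident to `v` or shares a vertex with an item listed before it. Fix such a list. The
first `i` items span, together with `v`, at most `2 * i + 1` vertices, so given their hash values
the next item meets one of these with probability at most `(2 * i + 1) / m`. A union bound over the
`n ^ k` lists gives `Pr(C(v) ≥ k) ≤ (2 * n * k / m) ^ k`. In the sparse regime the base of this
power is at most a negative power of `m`.
-/

open Finset

section Resampling

variable {ι α : Type*} [Fintype ι] [DecidableEq ι] [Fintype α]

/-- Resampling the value at `x`, that is `(e, a) ↦ Function.update e x a`, is at most `t`-to-one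
on the event counted on the left: the fiber over `e` is determined by a value in `T e`. -/
theorem card_filter_apply_mem_mul_card_le (x : ι) {P : (ι → α) → Prop} {T : (ι → α) → Finset α}
    {t : ℕ} (hP : ∀ e a, P e → P (Function.update e x a))
    (hT : ∀ e a, T (Function.update e x a) = T e) (ht : ∀ e, #(T e) ≤ t) :
    #{e | P e ∧ e x ∈ T e} * Fintype.card α ≤ t * #{e | P e} := by
  rw [← card_univ, ← card_product]
  refine card_le_mul_card_image_of_maps_to (f := fun q ↦ Function.update q.1 x q.2)
    (fun q hq ↦ ?_) t fun e _ ↦ ?_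
  · simp only [mem_product, mem_filter, mem_univ, true_and, and_true] at hq ⊢
    exact hP _ _ hq.1
  · refine (card_le_card_of_injOn (fun q ↦ q.1 x) ?_ ?_).trans (ht e)
    · rintro ⟨f, a⟩ hq
      simp only [coe_filter, mem_product, mem_filter, mem_univ, true_and, and_true,
        Set.mem_ofPred_eq] at hq
      obtain ⟨⟨-, hf⟩, rfl⟩ := hq
      simpa only [hT, mem_coe] using hf
    · rintro ⟨f, a⟩ hf ⟨g, b⟩ hg (hfg : f x = g x)
      have hf' : Function.update f x a = e := (mem_filter.1 hf).2
      have hg' : Function.update g x b = e := (mem_filter.1 hg).2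
      have hab : a = b := by
        simpa only [Function.update_self] using congrFun (hf'.trans hg'.symm) x
      have hfg' : f = g :=
        calc f = Function.update (Function.update f x a) x (f x) := by simp
          _ = Function.update (Function.update g x b) x (g x) := by rw [hf', hg', hfg]
          _ = g := by simp
      rw [hab, hfg']

end Resampling

section Exploration

variable {ι α : Type*}

/-- The vertices known after exploring the items of a list from `v`, where item `x` is the edge
joining left vertex `(e x).1` to right vertex `(e x).2`: `v` itself and all endpoints. -/
noncomputable def exploredVertices (e : ι → α × α) (v : α ⊕ α) : List ι → Finset (α ⊕ α)
  | [] => {v}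
  | x :: L => {Sum.inl (e x).1, Sum.inr (e x).2} ∪ exploredVertices e v L

/-- `L` is an exploration from `v`: its items are distinct, and each is incident to `v` or to an
item explored before it. The head of the list is the item explored last. -/
def IsExploration (e : ι → α × α) (v : α ⊕ α) : List ι → Prop
  | [] => True
  | x :: L => x ∉ L ∧ IsExploration e v L ∧
      (Sum.inl (e x).1 ∈ exploredVertices e v L ∨ Sum.inr (e x).2 ∈ exploredVertices e v L)

theorem card_exploredVertices_le (e : ι → α × α) (v : α ⊕ α) (L : List ι) :
    #(exploredVertices e v L) ≤ 2 * L.length + 1 := by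
  induction L with
  | nil => simp [exploredVertices]
  | cons x L ih =>
    have hunion := card_union_le {Sum.inl (e x).1, Sum.inr (e x).2} (exploredVertices e v L)
    have hpair := card_le_two (a := (Sum.inl (e x).1 : α ⊕ α)) (b := Sum.inr (e x).2)
    simp only [exploredVertices, List.length_cons]
    omega

theorem mem_exploredVertices_self (e : ι → α × α) (v : α ⊕ α) (L : List ι) :
    v ∈ exploredVertices e v L := by
  induction L with
  | nil => simp [exploredVertices]
  | cons x L ih => simp [exploredVertices, ih]

theorem endpoints_mem_exploredVertices {e : ι → α × α} {v : α ⊕ α} {x : ι} {L : List ι}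
    (hx : x ∈ L) :
    Sum.inl (e x).1 ∈ exploredVertices e v L ∧ Sum.inr (e x).2 ∈ exploredVertices e v L := by
  induction L with
  | nil => simp at hx
  | cons y L ih =>
    rcases List.mem_cons.1 hx with rfl | hx
    · simp [exploredVertices]
    · simp [exploredVertices, ih hx]

theorem exploredVertices_congr {e e' : ι → α × α} {L : List ι} (h : ∀ y ∈ L, e y = e' y)
    (v : α ⊕ α) : exploredVertices e v L = exploredVertices e' v L := by
  induction L with
  | nil => rfl
  | cons x L ih =>
    rw [List.forall_mem_cons] at h
    rw [exploredVertices, exploredVertices, h.1, ih h.2]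

theorem IsExploration.congr {e e' : ι → α × α} {v : α ⊕ α} {L : List ι}
    (hL : IsExploration e v L) (h : ∀ y ∈ L, e y = e' y) : IsExploration e' v L := by
  induction L with
  | nil => trivial
  | cons x L ih =>
    rw [List.forall_mem_cons] at h
    obtain ⟨hx, hL, hmeet⟩ := hL
    rw [h.1, exploredVertices_congr h.2] at hmeet
    exact ⟨hx, ih hL h.2, hmeet⟩

variable [Fintype ι] [DecidableEq ι] [Fintype α]

theorem card_filter_incident_le (S : Finset (α ⊕ α)) :
    #{p : α × α | Sum.inl p.1 ∈ S ∨ Sum.inr p.2 ∈ S} ≤ #S * Fintype.card α := by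
  calc #{p : α × α | Sum.inl p.1 ∈ S ∨ Sum.inr p.2 ∈ S}
      ≤ #(S.toLeft ×ˢ univ ∪ univ ×ˢ S.toRight) := card_le_card fun p hp ↦ by simpa using hp
    _ ≤ #(S.toLeft ×ˢ univ) + #(univ ×ˢ S.toRight) := card_union_le _ _
    _ = (#S.toLeft + #S.toRight) * Fintype.card α := by
      rw [card_product, card_product, card_univ]; ring
    _ = #S * Fintype.card α := by rw [card_toLeft_add_card_toRight]

theorem card_isExploration_cons_mul_card_le (v : α ⊕ α) (x : ι) (L : List ι) :
    #{e : ι → α × α | IsExploration e v (x :: L)} * Fintype.card α ≤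
      (2 * L.length + 1) * #{e : ι → α × α | IsExploration e v L} := by
  by_cases hx : x ∈ L
  · simp [IsExploration, hx]
  have hcongr (e : ι → α × α) (p : α × α) : ∀ y ∈ L, e y = Function.update e x p y :=
    fun y hy ↦ (Function.update_of_ne (ne_of_mem_of_not_mem hy hx) p e).symm
  have hcard : 0 < Fintype.card α := Fintype.card_pos_iff.2 ⟨v.elim id id⟩
  let incident (e : ι → α × α) : Finset (α × α) :=
    {p | Sum.inl p.1 ∈ exploredVertices e v L ∨ Sum.inr p.2 ∈ exploredVertices e v L}
  have hresample := card_filter_apply_mem_mul_card_le x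
    (P := (IsExploration · v L)) (T := incident) (t := (2 * L.length + 1) * Fintype.card α)
    (fun e p hL ↦ hL.congr (hcongr e p))
    (fun e p ↦ by simp only [incident, ← exploredVertices_congr (hcongr e p)])
    (fun e ↦ (card_filter_incident_le _).trans
      (Nat.mul_le_mul_right _ (card_exploredVertices_le e v L)))
  have hcons (e : ι → α × α) :
      IsExploration e v (x :: L) ↔ IsExploration e v L ∧ e x ∈ incident e := by
    simp [IsExploration, incident, hx]
  simp only [← hcons, Fintype.card_prod] at hresample
  refine Nat.le_of_mul_le_mul_right ?_ hcard
  linarith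

theorem card_isExploration_mul_pow_le (v : α ⊕ α) (L : List ι) :
    #{e : ι → α × α | IsExploration e v L} * Fintype.card α ^ L.length ≤
      (∏ i ∈ range L.length, (2 * i + 1)) * Fintype.card (ι → α × α) := by
  induction L with
  | nil => simpa using card_le_univ {e : ι → α × α | IsExploration e v []}
  | cons x L ih =>
    rw [List.length_cons, pow_succ', prod_range_succ]
    calc #{e : ι → α × α | IsExploration e v (x :: L)} *
          (Fintype.card α * Fintype.card α ^ L.length)
        ≤ (2 * L.length + 1) * #{e : ι → α × α | IsExploration e v L} *
            Fintype.card α ^ L.length := by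
          rw [← mul_assoc]
          exact Nat.mul_le_mul_right _ (card_isExploration_cons_mul_card_le v x L)
      _ ≤ (2 * L.length + 1) *
            ((∏ i ∈ range L.length, (2 * i + 1)) * Fintype.card (ι → α × α)) := by
          rw [mul_assoc]
          gcongr
      _ = _ := by ring

theorem card_exists_isExploration_mul_pow_le (v : α ⊕ α) (k : ℕ) :
    #{e : ι → α × α | ∃ L, L.length = k ∧ IsExploration e v L} * Fintype.card α ^ k ≤
      Fintype.card ι ^ k * ((∏ i ∈ range k, (2 * i + 1)) * Fintype.card (ι → α × α)) := by
  have hunion : ({e | ∃ L, L.length = k ∧ IsExploration e v L} : Finset (ι → α × α)) ⊆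
      univ.biUnion fun L : List.Vector ι k ↦ {e | IsExploration e v L.toList} := by
    intro e he
    obtain ⟨L, hlen, hL⟩ := (mem_filter.1 he).2
    exact mem_biUnion.2 ⟨⟨L, hlen⟩, mem_univ _, mem_filter.2 ⟨mem_univ _, hL⟩⟩
  calc _ ≤ (∑ L : List.Vector ι k, #{e : ι → α × α | IsExploration e v L.toList}) *
        Fintype.card α ^ k := by
        gcongr
        exact (card_le_card hunion).trans card_biUnion_le
    _ = ∑ L : List.Vector ι k, #{e : ι → α × α | IsExploration e v L.toList} *
        Fintype.card α ^ k := sum_mul ..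
    _ ≤ ∑ _L : List.Vector ι k, (∏ i ∈ range k, (2 * i + 1)) * Fintype.card (ι → α × α) :=
        sum_le_sum fun L _ ↦ by
          simpa only [L.toList_length] using card_isExploration_mul_pow_le v L.toList
    _ = _ := by simp

end Exploration

section CuckooGraph

variable {n m : ℕ}

theorem mem_iff_mem_of_cuckooConn {h₀ h₁ : Fin n → Fin m} {S : Finset (Fin m ⊕ Fin m)}
    (hS : ∀ x, Sum.inl (h₀ x) ∈ S ↔ Sum.inr (h₁ x) ∈ S) {a b : Fin m ⊕ Fin m}
    (hab : cuckooConn n m h₀ h₁ a b) : a ∈ S ↔ b ∈ S := by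
  induction hab with
  | rel a b hadj =>
    obtain ⟨x, rfl, rfl⟩ := hadj
    exact hS x
  | refl => rfl
  | symm _ _ _ ih => exact ih.symm
  | trans _ _ _ _ _ ih₁ ih₂ => exact ih₁.trans ih₂

/-- An exploration that cannot be extended has exhausted the component of `v`. -/
theorem IsExploration.exists_cons {ω : HashPair n m} {v : Fin m ⊕ Fin m} {L : List (Fin n)}
    (hL : IsExploration (fun x ↦ (ω.1 x, ω.2 x)) v L)
    (hlen : L.length < cuckooC n m ω.1 ω.2 v) :
    ∃ x, IsExploration (fun x ↦ (ω.1 x, ω.2 x)) v (x :: L) := by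
  by_contra! hmax
  set S := exploredVertices (fun x ↦ (ω.1 x, ω.2 x)) v L
  have hmem (x : Fin n) (hx : Sum.inl (ω.1 x) ∈ S ∨ Sum.inr (ω.2 x) ∈ S) : x ∈ L := by
    by_contra hxL
    exact hmax x ⟨hxL, hL, hx⟩
  have hclosed (x : Fin n) : Sum.inl (ω.1 x) ∈ S ↔ Sum.inr (ω.2 x) ∈ S :=
    ⟨fun hx ↦ (endpoints_mem_exploredVertices (hmem x (.inl hx))).2,
      fun hx ↦ (endpoints_mem_exploredVertices (hmem x (.inr hx))).1⟩
  have hcomp : ({x | cuckooConn n m ω.1 ω.2 (Sum.inl (ω.1 x)) v} : Finset (Fin n)) ⊆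
      L.toFinset := fun x hx ↦ by
    have hxv := mem_iff_mem_of_cuckooConn hclosed (mem_filter.1 hx).2
    exact List.mem_toFinset.2 (hmem x (.inl (hxv.2 (mem_exploredVertices_self _ _ _))))
  have hle : cuckooC n m ω.1 ω.2 v ≤ L.length := by
    rw [cuckooC, Nat.card_eq_fintype_card, Fintype.card_subtype]
    exact (card_le_card hcomp).trans (List.toFinset_card_le L)
  omega

theorem exists_isExploration_of_le_cuckooC {ω : HashPair n m} {v : Fin m ⊕ Fin m} {k : ℕ}
    (hk : k ≤ cuckooC n m ω.1 ω.2 v) :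
    ∃ L, L.length = k ∧ IsExploration (fun x ↦ (ω.1 x, ω.2 x)) v L := by
  induction k with
  | zero => exact ⟨[], rfl, trivial⟩
  | succ k ih =>
    obtain ⟨L, rfl, hL⟩ := ih (by omega)
    obtain ⟨x, hx⟩ := hL.exists_cons hk
    exact ⟨x :: L, rfl, hx⟩

theorem card_le_cuckooC_le_card_exists_isExploration (v : Fin m ⊕ Fin m) (k : ℕ) :
    Nat.card {ω : HashPair n m // k ≤ cuckooC n m ω.1 ω.2 v} ≤
      #{e : Fin n → Fin m × Fin m | ∃ L, L.length = k ∧ IsExploration e v L} := by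
  rw [Nat.card_eq_fintype_card, Fintype.card_subtype]
  refine card_le_card_of_injOn (Equiv.arrowProdEquivProdArrow _ _ _).symm (fun ω hω ↦ ?_)
    (Equiv.injective _).injOn
  exact mem_filter.2 ⟨mem_univ _, exists_isExploration_of_le_cuckooC (mem_filter.1 hω).2⟩

theorem cuckooPr_le_cuckooC_le_pow (v : Fin m ⊕ Fin m) (k : ℕ) :
    cuckooPr n m (fun ω ↦ k ≤ cuckooC n m ω.1 ω.2 v) ≤ (2 * n * k / m : ℝ) ^ k := by
  have : Nonempty (Fin m) := ⟨v.elim id id⟩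
  have hm : 0 < m := Fin.pos_iff_nonempty.2 this
  have hprod : ∏ i ∈ range k, (2 * i + 1) ≤ (2 * k) ^ k := by
    simpa using prod_le_pow_card (range k) (fun i ↦ 2 * i + 1) (2 * k) fun i hi ↦ by
      have := mem_range.1 hi
      omega
  have hcount : Nat.card {ω : HashPair n m // k ≤ cuckooC n m ω.1 ω.2 v} * m ^ k ≤
      (2 * n * k) ^ k * Nat.card (HashPair n m) :=
    calc _ ≤ #{e : Fin n → Fin m × Fin m | ∃ L, L.length = k ∧ IsExploration e v L} * m ^ k := by
          gcongr
          exact card_le_cuckooC_le_card_exists_isExploration v k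
      _ ≤ n ^ k * ((∏ i ∈ range k, (2 * i + 1)) * Fintype.card (Fin n → Fin m × Fin m)) := by
          simpa only [Fintype.card_fin] using
            card_exists_isExploration_mul_pow_le (ι := Fin n) v k
      _ ≤ n ^ k * ((2 * k) ^ k * Fintype.card (Fin n → Fin m × Fin m)) := by gcongr
      _ = _ := by
          rw [Nat.card_eq_fintype_card,
            Fintype.card_congr (Equiv.arrowProdEquivProdArrow (Fin n) _ _)]
          ring
  have htotal : (0 : ℝ) < Nat.card (HashPair n m) := by exact_mod_cast Nat.card_pos
  rw [cuckooPr, div_pow, div_le_div_iff₀ htotal (by positivity)]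
  exact_mod_cast hcount

end CuckooGraph

theorem two_mul_mul_div_le_rpow_neg {A x α β γ δ a b c : ℝ} (hx : 0 < x) (hA : 2 * A ≤ x ^ δ)
    (ha : a ≤ A * x ^ α) (hb : x ^ β ≤ b) (hc₀ : 0 ≤ c) (hc : c ≤ x ^ γ)
    (hexp : 2 * δ = β - α - γ) : 2 * a * c / b ≤ x ^ (-δ) := by
  have hb₀ : 0 < b := (Real.rpow_pos_of_pos hx β).trans_le hb
  rw [div_le_iff₀ hb₀]
  have hAα : 2 * (A * x ^ α) ≤ x ^ δ * x ^ α := by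
    rw [← mul_assoc]
    gcongr
  calc 2 * a * c ≤ x ^ δ * x ^ α * x ^ γ :=
        mul_le_mul (by linarith) hc hc₀ (by positivity)
    _ = x ^ (-δ) * x ^ β := by
        rw [← Real.rpow_add hx, ← Real.rpow_add hx, ← Real.rpow_add hx]
        congr 1
        linarith
    _ ≤ x ^ (-δ) * b := by gcongr

theorem inner_cuckoo_component_size_bound_general (A : ℝ) {α β γ : ℝ} (hexp : α + γ < β) :
    ∃ c : ℝ, 0 < c ∧ ∃ m₀ : ℕ, ∀ m : ℕ, m₀ ≤ m →
      ∀ m' : ℕ, (m : ℝ) ^ β ≤ m' →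
      ∀ n' : ℕ, (n' : ℝ) ≤ A * (m : ℝ) ^ α →
      ∀ k : ℕ, (k : ℝ) ≤ (m : ℝ) ^ γ →
      ∀ v : Fin m' ⊕ Fin m',
        cuckooPr n' m' (fun ω => k ≤ cuckooC n' m' ω.1 ω.2 v)
          ≤ (m : ℝ) ^ (-(c * k)) := by
  set c := (β - α - γ) / 2 with hc
  have hc₀ : 0 < c := by linarith
  have hlarge : ∀ᶠ m : ℕ in Filter.atTop, 0 < (m : ℝ) ∧ 2 * A ≤ (m : ℝ) ^ c :=
    tendsto_natCast_atTop_atTop.eventually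
      ((Filter.eventually_gt_atTop 0).and
        ((tendsto_rpow_atTop hc₀).eventually_ge_atTop (2 * A)))
  obtain ⟨m₀, hm₀⟩ := Filter.eventually_atTop.1 hlarge
  refine ⟨c, hc₀, m₀, fun m hm m' hm' n' hn' k hk v ↦ ?_⟩
  obtain ⟨hm_pos, hA⟩ := hm₀ m hm
  calc cuckooPr n' m' (fun ω => k ≤ cuckooC n' m' ω.1 ω.2 v)
      ≤ (2 * n' * k / m' : ℝ) ^ k := cuckooPr_le_cuckooC_le_pow v k
    _ ≤ ((m : ℝ) ^ (-c)) ^ k := by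
        gcongr
        exact two_mul_mul_div_le_rpow_neg hm_pos hA hn' hm' k.cast_nonneg hk (by linarith)
    _ = (m : ℝ) ^ (-(c * k)) := by
        rw [← Real.rpow_mul_natCast hm_pos.le, neg_mul]

/-- For the sparse inner cuckoo graph with `n' ≤ 2·m^{1/3}` edges on parts of size
`m' = ⌈m^{2/3}⌉`: for every `1 ≤ k ≤ m^{1/4}` and every vertex `v`,
`Pr(C(v) ≥ k) ≤ m^{−c·k}` for some universal constant `c > 0` and all large enough `m`. -/
theorem inner_cuckoo_component_size_bound :
    ∃ c : ℝ, 0 < c ∧ ∃ m₀ : ℕ, ∀ m : ℕ, m₀ ≤ m →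
      ∀ m' : ℕ, m' = ⌈(m : ℝ) ^ ((2 : ℝ) / 3)⌉₊ →
      ∀ n' : ℕ, 0 < n' → (n' : ℝ) ≤ 2 * (m : ℝ) ^ ((1 : ℝ) / 3) →
      ∀ k : ℕ, 1 ≤ k → (k : ℝ) ≤ (m : ℝ) ^ ((1 : ℝ) / 4) →
      ∀ v : Fin m' ⊕ Fin m',
        cuckooPr n' m' (fun ω => k ≤ cuckooC n' m' ω.1 ω.2 v)
          ≤ (m : ℝ) ^ (-(c * k)) := by
  obtain ⟨c, hc, m₀, hbound⟩ := inner_cuckoo_component_size_bound_general 2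
    (show (1 / 3 : ℝ) + 1 / 4 < 2 / 3 by norm_num)
  exact ⟨c, hc, m₀, fun m hm m' hm' n' _ hn' k _ hk v ↦
    hbound m hm m' (hm' ▸ Nat.le_ceil _) n' hn' k hk v⟩
end

section
/- Fix a constant ε > 0. There exist a constant c > 0 and a threshold m₀ (both depending only on ε) such that for all integers m ≥ m₀ and n ≥ 1 with (1+ε)·n ≤ m, and every real s with 1 ≤ s ≤ m^{1/6}, the random cuckoo graph with n edges on parts of size m satisfies Pr(ē(G) > s) ≤ m^{−c·s}. -/
open Classical

/-! Let `k ≤ ē`. The items in the components of positive excess outnumber their endpoints by at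
least `k`. Take a minimal set of items with this property: its surplus is exactly `k`, and deleting
an item would lose no endpoint, so every endpoint is hit at least twice.

Take a union bound over such cores with `L` items and `N = L - k` endpoints. Double counting the
pairs of a hash function and a choice of two labelled preimages of every endpoint gains `2 ^ (-N)`
over naive counting, which exactly pays for the choice of which of the `N` endpoints are left
vertices. With load `ρ = n / m < 1`, the cores on `L` items contribute at most
`4 ^ k / ((2 k)! m ^ k) * L ^ (3 k) * ρ ^ L`, and `∑ L ^ j * ρ ^ L ≤ j! / (1 - ρ) ^ (j + 1)` yields
`Pr(k ≤ ē) ≤ (O(k) / m) ^ k`, the constant depending on `ρ`. For `k` up to `m ^ γ` with `γ < 1`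
this is at most `m ^ (-c * k)` for every `c < 1 - γ` and large `m`.
-/

open Finset
open scoped Nat

lemma descFactorial_mul_descFactorial_mul_factorial_le {L p q c : ℕ} (x : ℕ)
    (h : p + q + c = 2 * L) :
    L.descFactorial p * x ^ (L - p) * (L.descFactorial q * x ^ (L - q)) * c ! ≤
      2 ^ c * L ! ^ 2 * x ^ c := by
  rcases lt_or_ge L p with hp | hp
  · simp [Nat.descFactorial_of_lt hp]
  rcases lt_or_ge L q with hq | hq
  · simp [Nat.descFactorial_of_lt hq]
  obtain rfl : c = (L - p) + (L - q) := by omega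
  calc L.descFactorial p * x ^ (L - p) * (L.descFactorial q * x ^ (L - q)) * (L - p + (L - q))!
      = ((L - p + (L - q)).choose (L - q)) * (((L - p)! * L.descFactorial p) *
          ((L - q)! * L.descFactorial q)) * x ^ (L - p + (L - q)) := by
        rw [← Nat.add_choose_mul_factorial_mul_factorial, pow_add]; ring
    _ = ((L - p + (L - q)).choose (L - q)) * L ! ^ 2 * x ^ (L - p + (L - q)) := by
        rw [Nat.factorial_mul_descFactorial hp, Nat.factorial_mul_descFactorial hq, sq]
    _ ≤ _ := by gcongr; exact Nat.choose_le_two_pow _ _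

lemma choose_mul_factorial_le_pow (n k : ℕ) : n.choose k * k ! ≤ n ^ k := by
  rw [mul_comm, ← Nat.descFactorial_eq_factorial_mul_choose]
  exact Nat.descFactorial_le_pow n k

lemma factorial_add_le (a k : ℕ) : (a + k)! ≤ a ! * (a + k) ^ k := by
  have h := Nat.factorial_mul_descFactorial (Nat.le_add_left k a)
  rw [Nat.add_sub_cancel] at h
  exact h ▸ Nat.mul_le_mul_left _ (Nat.descFactorial_le_pow _ _)

lemma sum_antidiagonal_choose (N : ℕ) : ∑ p ∈ antidiagonal N, N.choose p.1 = 2 ^ N := by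
  rw [Finset.Nat.sum_antidiagonal_eq_sum_range_succ_mk, Nat.sum_range_choose]

lemma sum_pow_mul_geometric_le (s : Finset ℕ) (j : ℕ) {ρ : ℝ} (hρ₀ : 0 ≤ ρ) (hρ₁ : ρ < 1) :
    ∑ L ∈ s, (L : ℝ) ^ j * ρ ^ L ≤ j ! / (1 - ρ) ^ (j + 1) := by
  have hρ : ‖ρ‖ < 1 := by rwa [Real.norm_of_nonneg hρ₀]
  have pow_le (L : ℕ) : (L : ℝ) ^ j ≤ j ! * (L + j).choose j := by
    rw [← Nat.cast_mul, ← Nat.ascFactorial_eq_factorial_mul_choose]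
    exact_mod_cast (Nat.pow_le_pow_left L.le_succ j).trans (Nat.pow_succ_le_ascFactorial _ j)
  calc ∑ L ∈ s, (L : ℝ) ^ j * ρ ^ L
      ≤ ∑ L ∈ s, j ! * ((L + j).choose j * ρ ^ L) := by
        refine sum_le_sum fun L _ => ?_
        rw [← mul_assoc]
        exact mul_le_mul_of_nonneg_right (pow_le L) (pow_nonneg hρ₀ L)
    _ ≤ j ! * ∑' L : ℕ, (L + j).choose j * ρ ^ L := by
        rw [← mul_sum]
        gcongr
        exact (summable_choose_mul_geometric_of_norm_lt_one j hρ).sum_le_tsum s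
          fun L _ => by positivity
    _ = j ! / (1 - ρ) ^ (j + 1) := by
        rw [tsum_choose_mul_geometric_of_norm_lt_one j hρ, mul_one_div]

section FoldCover

variable {ι κ : Type*} [DecidableEq κ] {r : ℕ} {h : ι → κ} {A : Finset ι} {I : Finset κ}

/-- `h` is an `r`-fold cover of `I` by `A`: it maps `A` into `I` and takes each value in `I` at
least `r` times on `A`. For `r = 2`, with `A` a set of edges and `I` their endpoints on one side,
this says that every vertex in `I` has degree at least two. -/
def IsFoldCover (r : ℕ) (h : ι → κ) (A : Finset ι) (I : Finset κ) : Prop :=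
  Set.MapsTo h A I ∧ ∀ b ∈ I, r ≤ #{x ∈ A | h x = b}

lemma IsFoldCover.exists_embedding (hcov : IsFoldCover r h A I) :
    ∃ e : I × Fin r ↪ A, ∀ p, h (e p) = p.1 := by
  have fibre_embedding (b : I) : Nonempty (Fin r ↪ ({x ∈ A | h x = b} : Finset ι)) :=
    Function.Embedding.nonempty_of_card_le (by simpa using hcov.2 b b.2)
  let f (b : I) := (fibre_embedding b).some
  have f_mem (b : I) (i : Fin r) : (f b i : ι) ∈ A ∧ h (f b i) = b := mem_filter.1 (f b i).2
  refine ⟨⟨fun p => ⟨f p.1 p.2, (f_mem p.1 p.2).1⟩, ?_⟩, fun p => (f_mem p.1 p.2).2⟩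
  rintro ⟨b, i⟩ ⟨b', i'⟩ heq
  have hval : (f b i : ι) = f b' i' := congrArg Subtype.val heq
  obtain rfl : b = b' :=
    Subtype.ext <| by rw [← (f_mem b i).2, ← (f_mem b' i').2, hval]
  rw [(f b).injective (Subtype.ext hval)]

lemma IsFoldCover.factorial_pow_le_card_embedding (hcov : IsFoldCover r h A I) :
    r ! ^ #I ≤ #{e : I × Fin r ↪ A | ∀ p, h (e p) = p.1} := by
  obtain ⟨e, he⟩ := hcov.exists_embedding
  have card_perms : #(univ : Finset (I → Equiv.Perm (Fin r))) = r ! ^ #I := by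
    simp [Fintype.card_perm]
  rw [← card_perms]
  refine card_le_card_of_injOn
    (fun σ => (Equiv.prodShear (Equiv.refl I) σ).toEmbedding.trans e) (fun σ _ => ?_) ?_
  · simp [he]
  · intro σ _ τ _ heq
    ext b i
    have h_apply : e (b, σ b i) = e (b, τ b i) := DFunLike.congr_fun heq (b, i)
    simpa using congrArg (Fin.val ∘ Prod.snd) (e.injective h_apply)

variable [DecidableEq ι] [Fintype ι] [Fintype κ]

lemma card_mapsTo_extending_le (e : I × Fin r ↪ A) :
    #{h : ι → κ | Set.MapsTo h A I ∧ ∀ p, h (e p) = p.1} ≤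
      #I ^ (#A - r * #I) * Fintype.card κ ^ (Fintype.card ι - #A) := by
  let Inner := {x : A // x ∉ Set.range e}
  let Outer := {x : ι // x ∉ A}
  have card_inner : Fintype.card Inner = #A - r * #I := by
    rw [Fintype.card_subtype_compl (· ∈ Set.range e), Fintype.card_coe,
      show Fintype.card {x // x ∈ Set.range e} = _ from Set.card_range_of_injective e.injective]
    simp [mul_comm]
  have card_outer : Fintype.card Outer = Fintype.card ι - #A := by
    simp [Outer, Fintype.card_subtype_compl]
  have card_target : #(Fintype.piFinset (fun _ : Inner => I) ×ˢ (univ : Finset (Outer → κ))) =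
      #I ^ (#A - r * #I) * Fintype.card κ ^ (Fintype.card ι - #A) := by
    rw [card_product, Fintype.card_piFinset, prod_const, card_univ, card_univ, Fintype.card_fun,
      card_inner, card_outer]
  rw [← card_target]
  refine card_le_card_of_injOn (fun h => (fun x => h x, fun x => h x)) (fun h hh => ?_) ?_
  · have h_mem : Set.MapsTo h A I := (mem_filter.1 hh).2.1
    simpa using fun x : Inner => h_mem x.1.2
  · intro h hh g hg heq
    obtain ⟨inner_eq, outer_eq⟩ := Prod.mk.inj heq
    funext x
    by_cases hxA : x ∈ A
    · by_cases hxe : ⟨x, hxA⟩ ∈ Set.range e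
      · obtain ⟨p, hp⟩ := hxe
        have h_extends := (mem_filter.1 hh).2.2 p
        have g_extends := (mem_filter.1 hg).2.2 p
        rw [hp] at h_extends g_extends
        exact h_extends.trans g_extends.symm
      · exact congrFun inner_eq ⟨⟨x, hxA⟩, hxe⟩
    · exact congrFun outer_eq ⟨x, hxA⟩

lemma card_isFoldCover_mul_le (r : ℕ) (A : Finset ι) (I : Finset κ) :
    #{h : ι → κ | IsFoldCover r h A I} * r ! ^ #I * Fintype.card κ ^ #A ≤
      (#A).descFactorial (r * #I) * #I ^ (#A - r * #I) * Fintype.card κ ^ Fintype.card ι := by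
  have double_count :=
    card_mul_le_card_mul (s := {h : ι → κ | IsFoldCover r h A I}) (t := univ)
      (fun (h : ι → κ) (e : I × Fin r ↪ A) => ∀ p, h (e p) = p.1)
      (fun h hh => (mem_filter.1 hh).2.factorial_pow_le_card_embedding)
      (fun e _ => (card_le_card fun h hh => by
        simp only [bipartiteBelow, mem_filter, mem_univ, true_and] at hh ⊢
        exact ⟨hh.1.1, hh.2⟩).trans (card_mapsTo_extending_le e))
  have card_embeddings :
      #(univ : Finset (I × Fin r ↪ A)) = (#A).descFactorial (r * #I) := by
    simp [Fintype.card_embedding_eq, mul_comm]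
  rw [card_embeddings] at double_count
  calc _ ≤ _ := Nat.mul_le_mul_right _ double_count
    _ = (#A).descFactorial (r * #I) * #I ^ (#A - r * #I) *
        (Fintype.card κ ^ (Fintype.card ι - #A) * Fintype.card κ ^ #A) := by ring
    _ = _ := by rw [← pow_add, Nat.sub_add_cancel (card_le_univ A)]

end FoldCover

section ExcessCore

lemma exists_sum_card_fibre_sub_add_card {E V C : Type*} [Fintype E] [Fintype V] [Fintype C]
    [DecidableEq C] (p : E → C) (q : V → C) :
    ∃ P : Finset C,
      ∑ c, (#{x | p x = c} - #{u | q u = c}) + #{u | q u ∈ P} = #{x | p x ∈ P} := by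
  let P : Finset C := {c | #{u | q u = c} < #{x | p x = c}}
  refine ⟨P, ?_⟩
  have sum_eq : ∑ c, (#{x | p x = c} - #{u | q u = c}) =
      ∑ c ∈ P, (#{x | p x = c} - #{u | q u = c}) := by
    refine (sum_subset (subset_univ P) fun c _ hc => ?_).symm
    simpa [P, Nat.sub_eq_zero_iff_le] using hc
  rw [sum_eq, ← sum_card_fiberwise_eq_card_filter, ← sum_card_fiberwise_eq_card_filter,
    ← sum_add_distrib]
  exact sum_congr rfl fun c hc => Nat.sub_add_cancel (mem_filter.1 hc).2.le

lemma exists_card_image_add_card_image_add_cuckooEbar_le {n m : ℕ} (h₀ h₁ : Fin n → Fin m) :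
    ∃ A : Finset (Fin n),
      #(A.image h₀) + #(A.image h₁) + cuckooEbar n m h₀ h₁ ≤ #A := by
  let q : Fin m ⊕ Fin m → Quotient (cuckooSetoid n m h₀ h₁) := Quotient.mk _
  have endpoints_connected (x : Fin n) : q (Sum.inr (h₁ x)) = q (Sum.inl (h₀ x)) :=
    (Quotient.sound (Relation.EqvGen.rel _ _ ⟨x, rfl, rfl⟩)).symm
  obtain ⟨P, hP⟩ := exists_sum_card_fibre_sub_add_card (fun x => q (Sum.inl (h₀ x))) q
  have ebar_eq : cuckooEbar n m h₀ h₁ =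
      ∑ c, (#{x | q (Sum.inl (h₀ x)) = c} - #{u | q u = c}) := by
    simp only [cuckooEbar, finsum_eq_sum_of_fintype, Nat.card_eq_fintype_card,
      Fintype.card_subtype, q]
  refine ⟨({x | q (Sum.inl (h₀ x)) ∈ P} : Finset (Fin n)), ?_⟩
  rw [← hP, ← ebar_eq, add_comm, ← card_disjSum]
  refine Nat.add_le_add_left (card_le_card fun u hu => ?_) _
  obtain ⟨a, ha, rfl⟩ | ⟨a, ha, rfl⟩ := mem_disjSum.1 hu <;>
  obtain ⟨x, hx, rfl⟩ := mem_image.1 ha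
  · simpa using hx
  · simpa [endpoints_connected] using hx

lemma two_le_card_fibre_of_card_image_le {ι κ : Type*} [DecidableEq ι] [DecidableEq κ]
    {h : ι → κ} {A : Finset ι} {x : ι} (hx : x ∈ A)
    (hcard : #(A.image h) ≤ #((A.erase x).image h)) : 2 ≤ #{y ∈ A | h y = h x} := by
  have image_eq : (A.erase x).image h = A.image h :=
    eq_of_subset_of_card_le (image_subset_image (erase_subset x A)) hcard
  obtain ⟨y, hy, hyx⟩ := mem_image.1 (image_eq ▸ mem_image_of_mem h hx)
  obtain ⟨y_ne, hyA⟩ := mem_erase.1 hy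
  exact one_lt_card.2 ⟨x, by simp [hx], y, by simp [hyA, hyx], y_ne.symm⟩

/-- The edge-vertex configuration forced by a large total excess: `v + w + k` items which `ω.1`
maps onto `v` left vertices and `ω.2` onto `w` right vertices, each vertex being hit at least
twice. It is a subgraph of minimum degree at least two with `k` more edges than vertices. -/
def HasExcessCore {n m : ℕ} (k v w : ℕ) (ω : HashPair n m) : Prop :=
  ∃ (A : Finset (Fin n)) (I J : Finset (Fin m)), #A = v + w + k ∧ #I = v ∧ #J = w ∧
    IsFoldCover 2 ω.1 A I ∧ IsFoldCover 2 ω.2 A J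

lemma exists_hasExcessCore {n m k : ℕ} {ω : HashPair n m} (hk : k ≤ cuckooEbar n m ω.1 ω.2) :
    ∃ v w, HasExcessCore k v w ω := by
  obtain ⟨A₀, hA₀⟩ := exists_card_image_add_card_image_add_cuckooEbar_le ω.1 ω.2
  obtain ⟨A, hA⟩ := exists_minimal_of_wellFoundedLT
    (fun A : Finset (Fin n) => #(A.image ω.1) + #(A.image ω.2) + k ≤ #A) ⟨A₀, by omega⟩
  have image_erase_le (h : Fin n → Fin m) (x : Fin n) :
      #((A.erase x).image h) ≤ #(A.image h) :=
    card_le_card (image_subset_image (erase_subset x A))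
  have erase_deficient {x : Fin n} (hx : x ∈ A) :
      #A ≤ #((A.erase x).image ω.1) + #((A.erase x).image ω.2) + k := by
    have := hA.not_prop_of_lt (erase_ssubset hx)
    have := card_erase_add_one hx
    omega
  have card_eq : #A = #(A.image ω.1) + #(A.image ω.2) + k := by
    refine le_antisymm ?_ hA.prop
    obtain rfl | ⟨x, hx⟩ := A.eq_empty_or_nonempty
    · simp
    · have := erase_deficient hx
      have := image_erase_le ω.1 x
      have := image_erase_le ω.2 x
      omega
  have covers {h : Fin n → Fin m}
      (h_image : ∀ x ∈ A, #(A.image h) ≤ #((A.erase x).image h)) :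
      IsFoldCover 2 h A (A.image h) := by
    refine ⟨fun x hx => mem_image_of_mem h hx, fun b hb => ?_⟩
    obtain ⟨x, hx, rfl⟩ := mem_image.1 hb
    exact two_le_card_fibre_of_card_image_le hx (h_image x hx)
  refine ⟨_, _, A, _, _, card_eq, rfl, rfl, covers fun x hx => ?_, covers fun x hx => ?_⟩
  · linarith [erase_deficient hx, image_erase_le ω.2 x]
  · linarith [erase_deficient hx, image_erase_le ω.1 x]

end ExcessCore

section UnionBound

variable {n m : ℕ}

lemma cuckooPr_eq_card_div (E : HashPair n m → Prop) :
    cuckooPr n m E = #{ω | E ω} / ((m : ℝ) ^ n * (m : ℝ) ^ n) := by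
  simp [cuckooPr, Nat.card_eq_fintype_card, Fintype.card_subtype]

lemma cuckooPr_le_sum {α : Type*} (s : Finset α) {F : HashPair n m → Prop}
    {E : α → HashPair n m → Prop} (hF : ∀ ω, F ω → ∃ a ∈ s, E a ω) :
    cuckooPr n m F ≤ ∑ a ∈ s, cuckooPr n m (E a) := by
  simp only [cuckooPr_eq_card_div, ← sum_div]
  gcongr
  have subset_biUnion : ({ω | F ω} : Finset _) ⊆ s.biUnion fun a => {ω | E a ω} :=
    fun ω hω => by simpa using hF ω (by simpa using hω)
  exact_mod_cast (card_le_card subset_biUnion).trans card_biUnion_le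

lemma cuckooPr_and_eq_mul (E₀ E₁ : (Fin n → Fin m) → Prop) :
    cuckooPr n m (fun ω => E₀ ω.1 ∧ E₁ ω.2) =
      (#{h | E₀ h} / (m : ℝ) ^ n) * (#{h | E₁ h} / (m : ℝ) ^ n) := by
  rw [cuckooPr_eq_card_div, div_mul_div_comm, ← Nat.cast_mul, ← card_product]
  congr 3
  ext ω
  simp

lemma card_isFoldCover_div_le (hm : 0 < m) (A : Finset (Fin n)) (I : Finset (Fin m)) :
    #{h : Fin n → Fin m | IsFoldCover 2 h A I} / (m : ℝ) ^ n ≤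
      (#A).descFactorial (2 * #I) * (#I : ℝ) ^ (#A - 2 * #I) / (2 ^ #I * (m : ℝ) ^ #A) := by
  have count := card_isFoldCover_mul_le 2 A I
  simp only [Nat.factorial_two, Fintype.card_fin, mul_assoc] at count
  rw [div_le_div_iff₀ (by positivity) (by positivity), mul_assoc]
  exact_mod_cast count

lemma cuckooPr_isFoldCover_and_isFoldCover_le (hm : 0 < m) (A : Finset (Fin n))
    (I J : Finset (Fin m)) :
    cuckooPr n m (fun ω => IsFoldCover 2 ω.1 A I ∧ IsFoldCover 2 ω.2 A J) ≤
      ((#A).descFactorial (2 * #I) * (#I : ℝ) ^ (#A - 2 * #I) / (2 ^ #I * (m : ℝ) ^ #A)) *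
        ((#A).descFactorial (2 * #J) * (#J : ℝ) ^ (#A - 2 * #J) / (2 ^ #J * (m : ℝ) ^ #A)) := by
  rw [cuckooPr_and_eq_mul (IsFoldCover 2 · A I) (IsFoldCover 2 · A J)]
  exact mul_le_mul (card_isFoldCover_div_le hm A I) (card_isFoldCover_div_le hm A J)
    (by positivity) (by positivity)

lemma excessCore_weight_le (n m k v w : ℕ) :
    n.choose (v + w + k) * (m.choose v * m.choose w) *
        ((v + w + k).descFactorial (2 * v) * v ^ (v + w + k - 2 * v) *
          ((v + w + k).descFactorial (2 * w) * w ^ (v + w + k - 2 * w))) * (2 * k)! ≤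
      (v + w).choose v * (n ^ (v + w + k) * m ^ (v + w) * (v + w + k) ^ (3 * k) * 4 ^ k) := by
  set L := v + w + k
  have v_le : v ≤ L := by omega
  have w_le : w ≤ L := by omega
  have choose_vertices : m.choose v * m.choose w * (v + w)! ≤ (v + w).choose v * m ^ (v + w) :=
    calc m.choose v * m.choose w * (v + w)!
        = (v + w).choose v * ((m.choose v * v !) * (m.choose w * w !)) := by
          rw [← Nat.add_choose_mul_factorial_mul_factorial, Nat.choose_symm_add]; ring
      _ ≤ (v + w).choose v * (m ^ v * m ^ w) := by
          gcongr <;> exact choose_mul_factorial_le_pow _ _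
      _ = _ := by rw [pow_add]
  calc _ ≤ n.choose L * (m.choose v * m.choose w) *
        (L.descFactorial (2 * v) * L ^ (L - 2 * v) *
          (L.descFactorial (2 * w) * L ^ (L - 2 * w))) * (2 * k)! := by gcongr
    _ = n.choose L * (m.choose v * m.choose w) *
        (L.descFactorial (2 * v) * L ^ (L - 2 * v) *
          (L.descFactorial (2 * w) * L ^ (L - 2 * w)) * (2 * k)!) := by ring
    _ ≤ n.choose L * (m.choose v * m.choose w) * (2 ^ (2 * k) * L ! ^ 2 * L ^ (2 * k)) := by
        refine Nat.mul_le_mul_left _ ?_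
        exact descFactorial_mul_descFactorial_mul_factorial_le L (by omega)
    _ = (n.choose L * L !) * (m.choose v * m.choose w * L !) * L ^ (2 * k) * 4 ^ k := by
        rw [pow_mul 2]; ring
    _ ≤ n ^ L * (m.choose v * m.choose w * ((v + w)! * L ^ k)) * L ^ (2 * k) * 4 ^ k := by
        gcongr
        · exact choose_mul_factorial_le_pow n L
        · exact factorial_add_le (v + w) k
    _ = (m.choose v * m.choose w * (v + w)!) * (n ^ L * L ^ (3 * k) * 4 ^ k) := by ring
    _ ≤ ((v + w).choose v * m ^ (v + w)) * (n ^ L * L ^ (3 * k) * 4 ^ k) := by gcongr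
    _ = _ := by ring

lemma cuckooPr_hasExcessCore_le (hm : 0 < m) (k v w : ℕ) :
    cuckooPr n m (HasExcessCore k v w) ≤
      ((v + w).choose v / 2 ^ (v + w) : ℝ) * (4 ^ k / ((2 * k)! * (m : ℝ) ^ k) *
        (((v + w + k : ℕ) : ℝ) ^ (3 * k) * ((n : ℝ) / m) ^ (v + w + k))) := by
  set L := v + w + k
  let T : Finset (Finset (Fin n) × Finset (Fin m) × Finset (Fin m)) :=
    powersetCard L univ ×ˢ powersetCard v univ ×ˢ powersetCard w univ
  let density (u : ℕ) : ℝ :=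
    L.descFactorial (2 * u) * (u : ℝ) ^ (L - 2 * u) / (2 ^ u * (m : ℝ) ^ L)
  have weight : (n.choose L * (m.choose v * m.choose w) *
      (L.descFactorial (2 * v) * (v : ℝ) ^ (L - 2 * v) *
        (L.descFactorial (2 * w) * (w : ℝ) ^ (L - 2 * w))) * (2 * k)! : ℝ) ≤
      (v + w).choose v * ((n : ℝ) ^ L * (m : ℝ) ^ (v + w) * (L : ℝ) ^ (3 * k) * 4 ^ k) :=
    mod_cast excessCore_weight_le n m k v w
  have fixed_sets_le : ∀ t ∈ T,
      cuckooPr n m (fun ω => IsFoldCover 2 ω.1 t.1 t.2.1 ∧ IsFoldCover 2 ω.2 t.1 t.2.2) ≤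
        density v * density w := by
    rintro ⟨A, I, J⟩ ht
    obtain ⟨hA, hI, hJ⟩ : #A = L ∧ #I = v ∧ #J = w := by simpa [T] using ht
    have core_le := cuckooPr_isFoldCover_and_isFoldCover_le hm A I J
    rwa [hA, hI, hJ] at core_le
  calc cuckooPr n m (HasExcessCore k v w)
      ≤ ∑ t ∈ T, cuckooPr n m
          (fun ω => IsFoldCover 2 ω.1 t.1 t.2.1 ∧ IsFoldCover 2 ω.2 t.1 t.2.2) := by
        refine cuckooPr_le_sum T fun ω hω => ?_
        obtain ⟨A, I, J, hA, hI, hJ, hcov⟩ := hω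
        exact ⟨(A, I, J), by simp [T, hA, hI, hJ, L], hcov⟩
    _ ≤ #T * (density v * density w) := by
        simpa using sum_le_card_nsmul T _ _ fixed_sets_le
    _ = (n.choose L * (m.choose v * m.choose w) *
        (L.descFactorial (2 * v) * (v : ℝ) ^ (L - 2 * v) *
          (L.descFactorial (2 * w) * (w : ℝ) ^ (L - 2 * w))) * (2 * k)!) /
        (2 ^ (v + w) * (2 * k)! * ((m : ℝ) ^ L * (m : ℝ) ^ L)) := by
        simp only [T, density, card_product, card_powersetCard, card_univ, Fintype.card_fin,
          Nat.cast_mul, pow_add]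
        field_simp
    _ ≤ (v + w).choose v * ((n : ℝ) ^ L * (m : ℝ) ^ (v + w) * (L : ℝ) ^ (3 * k) * 4 ^ k) /
        (2 ^ (v + w) * (2 * k)! * ((m : ℝ) ^ L * (m : ℝ) ^ L)) := by gcongr
    _ = _ := by
        rw [div_pow, show (m : ℝ) ^ L = (m : ℝ) ^ (v + w) * (m : ℝ) ^ k from pow_add _ _ _]
        field_simp

lemma cuckooPr_le_cuckooEbar_le_sum (hm : 0 < m) (k : ℕ) :
    cuckooPr n m (fun ω => k ≤ cuckooEbar n m ω.1 ω.2) ≤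
      4 ^ k / ((2 * k)! * (m : ℝ) ^ k) *
        ∑ L ∈ Ico k (n + 1 + k), (L : ℝ) ^ (3 * k) * ((n : ℝ) / m) ^ L := by
  let term (L : ℕ) : ℝ := (L : ℝ) ^ (3 * k) * ((n : ℝ) / m) ^ L
  have sum_weights (N : ℕ) : ∑ p ∈ antidiagonal N, (N.choose p.1 / 2 ^ N : ℝ) = 1 := by
    rw [← sum_div, div_eq_one_iff_eq (by positivity)]
    exact_mod_cast sum_antidiagonal_choose N
  calc cuckooPr n m (fun ω => k ≤ cuckooEbar n m ω.1 ω.2)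
      ≤ ∑ i ∈ (range (n + 1)).sigma fun N => antidiagonal N,
          cuckooPr n m (HasExcessCore k i.2.1 i.2.2) := by
        refine cuckooPr_le_sum _ fun ω hω => ?_
        obtain ⟨v, w, hcore⟩ := exists_hasExcessCore hω
        obtain ⟨A, _, _, hA, _⟩ := id hcore
        have : #A ≤ n := card_finset_fin_le A
        have vertices_lt : v + w < n + 1 := by omega
        exact ⟨⟨v + w, v, w⟩, mem_sigma.2
          ⟨mem_range.2 vertices_lt, HasAntidiagonal.mem_antidiagonal.2 rfl⟩, hcore⟩
    _ = ∑ N ∈ range (n + 1), ∑ p ∈ antidiagonal N,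
          cuckooPr n m (HasExcessCore k p.1 p.2) := sum_sigma _ _ _
    _ ≤ ∑ N ∈ range (n + 1), ∑ p ∈ antidiagonal N,
          (N.choose p.1 / 2 ^ N : ℝ) * (4 ^ k / ((2 * k)! * (m : ℝ) ^ k) * term (N + k)) := by
        refine sum_le_sum fun N _ => sum_le_sum fun p hp => ?_
        obtain rfl := HasAntidiagonal.mem_antidiagonal.1 hp
        exact cuckooPr_hasExcessCore_le hm k p.1 p.2
    _ = 4 ^ k / ((2 * k)! * (m : ℝ) ^ k) * ∑ L ∈ Ico k (n + 1 + k), term L := by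
        simp only [← sum_mul, sum_weights, one_mul]
        rw [← mul_sum, range_eq_Ico, sum_Ico_add', zero_add]

theorem cuckooPr_le_cuckooEbar_le (hnm : n < m) (k : ℕ) :
    cuckooPr n m (fun ω => k ≤ cuckooEbar n m ω.1 ω.2) ≤
      (1 - (n : ℝ) / m)⁻¹ * (12 * k / ((1 - (n : ℝ) / m) ^ 3 * m)) ^ k := by
  have hm : (0 : ℝ) < m := mod_cast (Nat.zero_le n).trans_lt hnm
  have load_lt_one : (n : ℝ) / m < 1 := (div_lt_one hm).2 (mod_cast hnm)
  have gap_pos : 0 < 1 - (n : ℝ) / m := sub_pos.2 load_lt_one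
  have factorial_le : ((3 * k)! : ℝ) ≤ (2 * k)! * (3 * k) ^ k := by
    have := factorial_add_le (2 * k) k
    rw [show 2 * k + k = 3 * k by ring] at this
    exact_mod_cast this
  calc cuckooPr n m (fun ω => k ≤ cuckooEbar n m ω.1 ω.2)
      ≤ 4 ^ k / ((2 * k)! * (m : ℝ) ^ k) *
          ((3 * k)! / (1 - (n : ℝ) / m) ^ (3 * k + 1)) := by
        refine (cuckooPr_le_cuckooEbar_le_sum (mod_cast hm) k).trans ?_
        gcongr
        exact sum_pow_mul_geometric_le _ _ (by positivity) load_lt_one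
    _ ≤ 4 ^ k / ((2 * k)! * (m : ℝ) ^ k) *
          ((2 * k)! * (3 * k) ^ k / (1 - (n : ℝ) / m) ^ (3 * k + 1)) := by gcongr
    _ = _ := by
        generalize 1 - (n : ℝ) / m = δ at gap_pos
        rw [pow_succ, pow_mul, show (12 : ℝ) * k = 4 * (3 * k) by ring, div_pow, mul_pow 4,
          mul_pow (δ ^ 3)]
        field_simp

lemma cuckooPr_le_cuckooEbar_le_pow {δ : ℝ} (hδ : 0 < δ) (hm : 0 < m)
    (hload : (n : ℝ) / m ≤ 1 - δ) {k : ℕ} (hk : k ≠ 0) :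
    cuckooPr n m (fun ω => k ≤ cuckooEbar n m ω.1 ω.2) ≤ (12 * k / (δ ^ 4 * m)) ^ k := by
  have hm' : (0 : ℝ) < m := mod_cast hm
  have hnm : n < m := by
    have : (n : ℝ) / m < 1 := by linarith
    exact_mod_cast (div_lt_one hm').1 this
  have hδ_le : δ ≤ 1 - (n : ℝ) / m := by linarith
  have gap_pos : 0 < 1 - (n : ℝ) / m := hδ.trans_le hδ_le
  have one_le_inv : 1 ≤ δ⁻¹ :=
    (one_le_inv₀ hδ).2 (hδ_le.trans (sub_le_self 1 (by positivity)))
  calc cuckooPr n m (fun ω => k ≤ cuckooEbar n m ω.1 ω.2)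
      ≤ (1 - (n : ℝ) / m)⁻¹ * (12 * k / ((1 - (n : ℝ) / m) ^ 3 * m)) ^ k :=
        cuckooPr_le_cuckooEbar_le hnm k
    _ ≤ δ⁻¹ * (12 * k / (δ ^ 3 * m)) ^ k := by gcongr
    _ ≤ δ⁻¹ ^ k * (12 * k / (δ ^ 3 * m)) ^ k := by
        gcongr
        exact le_self_pow₀ one_le_inv hk
    _ = (12 * k / (δ ^ 4 * m)) ^ k := by
        rw [← mul_pow]
        field_simp

lemma cuckooPr_lt_cuckooEbar_le_pow {δ : ℝ} (hδ : 0 < δ) (hm : 0 < m)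
    (hload : (n : ℝ) / m ≤ 1 - δ) {s : ℝ} (hs : 0 ≤ s) :
    cuckooPr n m (fun ω => s < (cuckooEbar n m ω.1 ω.2 : ℝ)) ≤
      (12 * (s + 1) / (δ ^ 4 * m)) ^ (⌊s⌋₊ + 1) := by
  have event_eq : (fun ω : HashPair n m => s < (cuckooEbar n m ω.1 ω.2 : ℝ)) =
      fun ω => ⌊s⌋₊ + 1 ≤ cuckooEbar n m ω.1 ω.2 := by
    funext ω
    rw [← Nat.floor_lt hs, Nat.succ_le_iff]
  rw [event_eq]
  refine (cuckooPr_le_cuckooEbar_le_pow hδ hm hload (Nat.succ_ne_zero _)).trans ?_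
  push_cast
  gcongr
  exact Nat.floor_le hs

end UnionBound

lemma eventually_mul_rpow_div_le (K : ℝ) {γ c : ℝ} (hγc : γ + c < 1) :
    ∀ᶠ x : ℝ in Filter.atTop, K * x ^ γ / x ≤ x ^ (-c) := by
  have exponent_pos : 0 < 1 - (γ + c) := by linarith
  filter_upwards [(tendsto_rpow_atTop exponent_pos).eventually_ge_atTop K,
    Filter.eventually_gt_atTop 0] with x hK hx
  calc K * x ^ γ / x ≤ x ^ (1 - (γ + c)) * x ^ γ / x := by gcongr
    _ = x ^ (-c) := by
        rw [← Real.rpow_add hx, ← Real.rpow_sub_one hx.ne']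
        ring_nf

theorem outer_stash_bound_general {ε γ c : ℝ} (hε : 0 < ε) (hγ : 0 ≤ γ) (hc : 0 ≤ c)
    (hγc : γ + c < 1) :
    ∃ m₀ : ℕ, ∀ m n : ℕ, m₀ ≤ m → (1 + ε) * n ≤ m →
      ∀ s : ℝ, 0 ≤ s → s ≤ (m : ℝ) ^ γ →
        cuckooPr n m (fun ω => s < (cuckooEbar n m ω.1 ω.2 : ℝ)) ≤ (m : ℝ) ^ (-(c * s)) := by
  set δ : ℝ := ε / (1 + ε) with hδ_def
  have hδ : 0 < δ := by positivity
  obtain ⟨m₀, hm₀⟩ := Filter.eventually_atTop.1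
    (tendsto_natCast_atTop_atTop.eventually (eventually_mul_rpow_div_le (24 / δ ^ 4) hγc))
  refine ⟨max m₀ 1, fun m n hm hload s hs₀ hs => ?_⟩
  have hm_pos : 0 < m := (le_max_right m₀ 1).trans hm
  have one_le_m : (1 : ℝ) ≤ m := mod_cast hm_pos
  have load_le : (n : ℝ) / m ≤ 1 - δ := by
    rw [hδ_def, div_le_iff₀ (by positivity)]
    field_simp
    linarith
  have s_add_one_le : s + 1 ≤ 2 * (m : ℝ) ^ γ := by
    linarith [Real.one_le_rpow one_le_m hγ]
  have base_le : 12 * (s + 1) / (δ ^ 4 * m) ≤ (m : ℝ) ^ (-c) :=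
    calc 12 * (s + 1) / (δ ^ 4 * m) ≤ 12 * (2 * (m : ℝ) ^ γ) / (δ ^ 4 * m) := by gcongr
      _ = 24 / δ ^ 4 * (m : ℝ) ^ γ / m := by
          field_simp
          norm_num
      _ ≤ (m : ℝ) ^ (-c) := hm₀ m ((le_max_left m₀ 1).trans hm)
  have s_le_k : s ≤ (⌊s⌋₊ + 1 : ℕ) := by exact_mod_cast (Nat.lt_floor_add_one s).le
  calc cuckooPr n m (fun ω => s < (cuckooEbar n m ω.1 ω.2 : ℝ))
      ≤ (12 * (s + 1) / (δ ^ 4 * m)) ^ (⌊s⌋₊ + 1) :=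
        cuckooPr_lt_cuckooEbar_le_pow hδ hm_pos load_le hs₀
    _ ≤ ((m : ℝ) ^ (-c)) ^ (⌊s⌋₊ + 1) := by gcongr
    _ = (m : ℝ) ^ (-(c * (⌊s⌋₊ + 1 : ℕ))) := by
        rw [← Real.rpow_natCast, ← Real.rpow_mul (by positivity), neg_mul]
    _ ≤ (m : ℝ) ^ (-(c * s)) := by gcongr

/-- Stash-size bound for the primary table: if `(1+ε)·n ≤ m` then for every real
`1 ≤ s ≤ m^{1/6}`, `Pr(ē(G) > s) ≤ m^{−c·s}`, for constants `c > 0`, `m₀` depending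
only on `ε`. -/
theorem outer_stash_bound (ε : ℝ) (hε : 0 < ε) :
    ∃ c : ℝ, 0 < c ∧ ∃ m₀ : ℕ, ∀ m n : ℕ, m₀ ≤ m → 1 ≤ n → (1 + ε) * n ≤ m →
      ∀ s : ℝ, 1 ≤ s → s ≤ (m : ℝ) ^ ((1 : ℝ) / 6) →
        cuckooPr n m (fun ω => s < (cuckooEbar n m ω.1 ω.2 : ℝ))
          ≤ (m : ℝ) ^ (-(c * s)) := by
  obtain ⟨m₀, hm₀⟩ := outer_stash_bound_general (γ := 1 / 6) (c := 1 / 2) hε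
    (by norm_num) (by norm_num) (by norm_num)
  exact ⟨1 / 2, by norm_num, m₀, fun m n hm _ hload s hs₁ hs =>
    hm₀ m n hm hload s (zero_le_one.trans hs₁) hs⟩
end

section
/- Fix a constant ε > 0 and suppose (1+ε)·n ≤ m. There exists a constant β ∈ (0,1), depending only on ε, such that for every vertex v of the random cuckoo graph with n edges on parts of size m and every natural number t ≥ 1, Pr(B_v ≥ t) ≤ ∑_{k=1}^∞ min((3·e⁵·k³/m)^t, 1) · β^k. -/
open Classical

/-!
Write `pₙ(k)` for the probability that the component of `v` has `k` vertices after `n` edges.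
Count in two ways the pairs of an edge sequence of length `n + 1` and a position in it outside the
component of `v`: such a component contains at least `k - 1` edges, which leaves at most `n + 2 - k`
positions, and at most a fraction `k / m` of the possible edges touch it. Therefore
`(n + 1) (m - k) pₙ(k) ≤ m (n + 2 - k) pₙ₊₁(k)`, so as long as `n + 1 ≤ (1 - δ) m` an additional
edge multiplies `pₙ(k)` by at least `exp ((δ k - 1) / m)`. If `n ≤ (1 - 2δ) m`, then `δ m` further
edges may be added, and since the resulting probability is at most `1`, `pₙ(k) ≤ C α ^ k` with
`C = exp (3δ)` and `α = exp (-δ²)`.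

An edge on a cycle can be deleted without changing the vertex set of the component, and it is one of
at most `k²` edges inside it. So each unit of the cyclotomic number costs a factor
`n k² / m² ≤ k² / m`. Summing over `k` gives the series with the additional factor `C`, which is
absorbed by passing from `α` to `β = α ^ (1 / P)` for an integer `P ≥ C`: each term is then
dominated by a block of `P` terms of the new series.
-/

section Component

variable {V ι κ : Type*} {f : ι → V × V} {g : κ → V × V} {v : V}

/-- The vertex set of the connected component of `v` in the multigraph with edge family `f`, each
edge being given by its pair of endpoints. -/
def componentVerts (f : ι → V × V) (v : V) : Set V :=
  {u | Relation.EqvGen (fun a b => ∃ x, a = (f x).1 ∧ b = (f x).2) u v}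

/-- The edges of the connected component of `v` in the multigraph with edge family `f`. Both
endpoints of an edge lie in the same component, so it suffices to test the first one. -/
def componentEdges (f : ι → V × V) (v : V) : Set ι :=
  {x | (f x).1 ∈ componentVerts f v}

/-- The cyclotomic number of the connected component of `v`. The truncated subtraction is harmless
for finite multigraphs, by `ncard_componentVerts_le`. -/
noncomputable def cycleRank (f : ι → V × V) (v : V) : ℕ :=
  (componentEdges f v).ncard + 1 - (componentVerts f v).ncard

theorem mem_componentVerts_self (f : ι → V × V) (v : V) : v ∈ componentVerts f v :=
  Relation.EqvGen.refl v

theorem fst_mem_componentVerts_iff_snd_mem (f : ι → V × V) (v : V) (x : ι) :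
    (f x).1 ∈ componentVerts f v ↔ (f x).2 ∈ componentVerts f v := by
  have hx : Relation.EqvGen (fun a b => ∃ x, a = (f x).1 ∧ b = (f x).2) (f x).1 (f x).2 :=
    .rel _ _ ⟨x, rfl, rfl⟩
  exact ⟨fun h => .trans _ _ _ (.symm _ _ hx) h, fun h => .trans _ _ _ hx h⟩

theorem componentVerts_subset_of_closed {C : Set V} (hv : v ∈ C)
    (hC : ∀ x, (f x).1 ∈ C ↔ (f x).2 ∈ C) : componentVerts f v ⊆ C := by
  intro u hu
  suffices h : u ∈ C ↔ v ∈ C from h.2 hv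
  change Relation.EqvGen _ u v at hu
  clear hv
  induction hu with
  | rel a b hab => obtain ⟨x, rfl, rfl⟩ := hab; exact hC x
  | refl a => rfl
  | symm a b _ ih => exact ih.symm
  | trans a b c _ _ ihab ihbc => exact ihab.trans ihbc

theorem componentVerts_mono (h : Set.range f ⊆ Set.range g) :
    componentVerts f v ⊆ componentVerts g v := by
  refine componentVerts_subset_of_closed (mem_componentVerts_self g v) fun x => ?_
  obtain ⟨y, hy⟩ := h ⟨x, rfl⟩
  rw [← hy]
  exact fst_mem_componentVerts_iff_snd_mem g v y

theorem componentVerts_eq_comp_of_avoid (e : κ → ι)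
    (h : ∀ x ∉ Set.range e, (f x).1 ∉ componentVerts (f ∘ e) v ∧
      (f x).2 ∉ componentVerts (f ∘ e) v) :
    componentVerts f v = componentVerts (f ∘ e) v := by
  refine (componentVerts_subset_of_closed (mem_componentVerts_self _ v) fun x => ?_).antisymm
    (componentVerts_mono (Set.range_comp_subset_range e f))
  by_cases hx : x ∈ Set.range e
  · obtain ⟨y, rfl⟩ := hx
    exact fst_mem_componentVerts_iff_snd_mem (f ∘ e) v y
  · exact iff_of_false (h x hx).1 (h x hx).2

theorem exists_mem_notMem_of_not_componentVerts_subset {W : Set V} (hv : v ∈ W)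
    (hW : ¬ componentVerts f v ⊆ W) :
    ∃ x, ∃ a ∈ W, ∃ b ∉ W, f x = (a, b) ∨ f x = (b, a) := by
  by_contra! hclosed
  refine hW (componentVerts_subset_of_closed hv fun x => ⟨fun h₁ => ?_, fun h₂ => ?_⟩)
  · by_contra h₂
    exact (hclosed x _ h₁ _ h₂).1 rfl
  · by_contra h₁
    exact (hclosed x _ h₂ _ h₁).2 rfl

theorem exists_tree_of_lt_ncard_componentVerts (f : ι → V × V) (v : V) (j : ℕ)
    (hj : j < (componentVerts f v).ncard) :
    ∃ (T : Finset ι) (W : Finset V), T.card = j ∧ W.card = j + 1 ∧ v ∈ W ∧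
      (W : Set V) ⊆ componentVerts (fun x : T => f x) v ∧
      ∀ x ∈ T, (f x).1 ∈ W ∧ (f x).2 ∈ W := by
  induction j with
  | zero => exact ⟨∅, {v}, by simp, by simp, by simp, by simp [mem_componentVerts_self], by simp⟩
  | succ j ih =>
    obtain ⟨T, W, hT, hW, hv, hWT, hTW⟩ := ih (by omega)
    have hnot : ¬ componentVerts f v ⊆ W := fun hsub => by
      have := Set.ncard_le_ncard hsub W.finite_toSet
      rw [Set.ncard_coe_finset] at this
      omega
    obtain ⟨x, a, ha, b, hb, hx⟩ := exists_mem_notMem_of_not_componentVerts_subset hv hnot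
    have hxT : x ∉ T := fun hmem => by
      have := hTW x hmem
      rcases hx with hx | hx <;> simp_all
    have hsub : componentVerts (fun y : T => f y) v ⊆
        componentVerts (fun y : (insert x T : Finset ι) => f y) v :=
      componentVerts_mono (by
        rintro _ ⟨y, rfl⟩
        exact ⟨⟨y, Finset.mem_insert_of_mem y.2⟩, rfl⟩)
    have hbmem : b ∈ componentVerts (fun y : (insert x T : Finset ι) => f y) v := by
      have hclosed := fst_mem_componentVerts_iff_snd_mem
        (fun y : (insert x T : Finset ι) => f y) v ⟨x, Finset.mem_insert_self x T⟩
      have hamem := hsub (hWT ha)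
      rcases hx with hx | hx <;> simp_all
    refine ⟨insert x T, insert b W, by rw [Finset.card_insert_of_notMem hxT, hT],
      by rw [Finset.card_insert_of_notMem (mod_cast hb), hW], Finset.mem_insert_of_mem hv, ?_, ?_⟩
    · rw [Finset.coe_insert]
      exact Set.insert_subset hbmem (hWT.trans hsub)
    · have ha' : a ∈ W := ha
      simp only [Finset.mem_insert, forall_eq_or_imp]
      exact ⟨by rcases hx with hx | hx <;> simp [hx, ha'],
        fun y hy => ⟨.inr (hTW y hy).1, .inr (hTW y hy).2⟩⟩

variable [Finite V]

theorem ncard_componentVerts_pos (f : ι → V × V) (v : V) : 0 < (componentVerts f v).ncard :=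
  (Set.ncard_pos (Set.toFinite _)).2 ⟨v, mem_componentVerts_self f v⟩

theorem exists_spanning_tree (f : ι → V × V) (v : V) :
    ∃ T : Finset ι, (T : Set ι) ⊆ componentEdges f v ∧
      T.card + 1 = (componentVerts f v).ncard ∧
      componentVerts (fun x : T => f x) v = componentVerts f v := by
  have hpos := ncard_componentVerts_pos f v
  obtain ⟨T, W, hT, hW, -, hWT, hTW⟩ :=
    exists_tree_of_lt_ncard_componentVerts f v ((componentVerts f v).ncard - 1) (by omega)
  have hTf : componentVerts (fun x : T => f x) v ⊆ componentVerts f v :=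
    componentVerts_mono (by rintro _ ⟨x, rfl⟩; exact ⟨x, rfl⟩)
  have hWf : (W : Set V) = componentVerts f v :=
    Set.eq_of_subset_of_ncard_le (hWT.trans hTf) (by rw [Set.ncard_coe_finset]; omega)
  refine ⟨T, fun x hx => ?_, by rw [hT, Nat.sub_add_cancel hpos], hTf.antisymm (hWf ▸ hWT)⟩
  change (f x).1 ∈ componentVerts f v
  rw [← hWf]
  exact (hTW x hx).1

variable [Finite ι]

theorem ncard_componentVerts_le (f : ι → V × V) (v : V) :
    (componentVerts f v).ncard ≤ (componentEdges f v).ncard + 1 := by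
  obtain ⟨T, hT, hcard, -⟩ := exists_spanning_tree f v
  have := Set.ncard_le_ncard hT
  rw [Set.ncard_coe_finset] at this
  omega

theorem exists_componentVerts_eq_of_cycleRank_pos (h : 0 < cycleRank f v) :
    ∃ x ∈ componentEdges f v, ∀ {κ : Type*} (e : κ → ι), {x}ᶜ ⊆ Set.range e →
      componentVerts (f ∘ e) v = componentVerts f v := by
  obtain ⟨T, -, hcard, hspan⟩ := exists_spanning_tree f v
  have hlt : (T : Set ι).ncard < (componentEdges f v).ncard := by
    rw [Set.ncard_coe_finset]
    unfold cycleRank at h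
    omega
  obtain ⟨x, hx, hxT⟩ := Set.exists_mem_notMem_of_ncard_lt_ncard hlt
  refine ⟨x, hx, fun e he => (componentVerts_mono (Set.range_comp_subset_range e f)).antisymm ?_⟩
  rw [← hspan]
  refine componentVerts_mono ?_
  rintro _ ⟨y, rfl⟩
  obtain ⟨z, hz⟩ := he (show (y : ι) ∈ ({x} : Set ι)ᶜ from fun hyx => hxT (hyx ▸ y.2))
  exact ⟨z, congrArg f hz⟩

end Component

section Deletion

variable {V : Type*} {n : ℕ} {f : Fin (n + 1) → V × V} {v : V}

theorem cycleRank_le_comp_succAbove_add_one {x : Fin (n + 1)}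
    (h : componentVerts (f ∘ x.succAbove) v = componentVerts f v) :
    cycleRank f v ≤ cycleRank (f ∘ x.succAbove) v + 1 := by
  have hsub : componentEdges f v ⊆
      insert x (x.succAbove '' componentEdges (f ∘ x.succAbove) v) := fun y hy => by
    rcases eq_or_ne y x with rfl | hyx
    · exact Set.mem_insert _ _
    · obtain ⟨z, rfl⟩ := Fin.exists_succAbove_eq hyx
      refine .inr ⟨z, ?_, rfl⟩
      change (f (x.succAbove z)).1 ∈ componentVerts (f ∘ x.succAbove) v
      rw [h]
      exact hy
  have hcard := (Set.ncard_le_ncard hsub).trans (Set.ncard_insert_le _ _)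
  rw [Set.ncard_image_of_injective _ x.succAbove_right_injective] at hcard
  unfold cycleRank
  rw [h]
  omega

theorem exists_componentVerts_comp_succAbove_eq [Finite V] (h : 0 < cycleRank f v) :
    ∃ x ∈ componentEdges f v, componentVerts (f ∘ x.succAbove) v = componentVerts f v := by
  obtain ⟨x, hx, hcomp⟩ := exists_componentVerts_eq_of_cycleRank_pos h
  exact ⟨x, hx, hcomp x.succAbove (Fin.range_succAbove x).ge⟩

end Deletion

theorem ncard_edges_inside_le_sq {V E : Type*} {ends : E → V × V} (hends : ends.Injective)
    {W : Set V} (hW : W.Finite) :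
    {e | (ends e).1 ∈ W ∧ (ends e).2 ∈ W}.ncard ≤ W.ncard ^ 2 := by
  rw [sq, ← Set.ncard_prod]
  exact Set.ncard_le_ncard_of_injOn ends (fun e he => he) hends.injOn (hW.prod hW)

theorem pos_of_incident_le {V E : Type*} [Finite E] [Nonempty E] {ends : E → V × V} {Δ : ℕ}
    (hΔ : ∀ u, {e | (ends e).1 = u ∨ (ends e).2 = u}.ncard ≤ Δ) : 0 < Δ := by
  obtain ⟨e⟩ := ‹Nonempty E›
  exact ((Set.ncard_pos (Set.toFinite _)).2 ⟨e, .inl rfl⟩).trans_le (hΔ (ends e).1)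

section Counting

variable {V E : Type*} [Fintype E]

/-- The sequences of `n` edges drawn from `E`, with endpoints given by `ends`, for which the
component of `v` has `k` vertices and cyclotomic number at least `b`. -/
noncomputable def rankedFamilies (ends : E → V × V) (v : V) (n k b : ℕ) : Finset (Fin n → E) :=
  {h | (componentVerts (ends ∘ h) v).ncard = k ∧ b ≤ cycleRank (ends ∘ h) v}

theorem mem_rankedFamilies {ends : E → V × V} {v : V} {n k b : ℕ} {h : Fin n → E} :
    h ∈ rankedFamilies ends v n k b ↔
      (componentVerts (ends ∘ h) v).ncard = k ∧ b ≤ cycleRank (ends ∘ h) v := by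
  simp [rankedFamilies]

theorem rankedFamilies_subset_zero (ends : E → V × V) (v : V) (n k b : ℕ) :
    rankedFamilies ends v n k b ⊆ rankedFamilies ends v n k 0 := fun _ hh =>
  mem_rankedFamilies.2 ⟨(mem_rankedFamilies.1 hh).1, Nat.zero_le _⟩

theorem card_le_card_avoiding_add {ends : E → V × V} {Δ : ℕ}
    (hΔ : ∀ u, {e | (ends e).1 = u ∨ (ends e).2 = u}.ncard ≤ Δ) {W : Set V} (hW : W.Finite) :
    Fintype.card E ≤ {e | (ends e).1 ∉ W ∧ (ends e).2 ∉ W}.ncard + Δ * W.ncard := by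
  lift W to Finset V using hW
  have hcover : (Set.univ : Set E) ⊆ {e | (ends e).1 ∉ (W : Set V) ∧ (ends e).2 ∉ (W : Set V)} ∪
      ⋃ u ∈ W, {e | (ends e).1 = u ∨ (ends e).2 = u} := fun e _ => by
    simp only [Set.mem_union, Set.mem_iUnion, Set.mem_ofPred_eq, Finset.mem_coe, exists_prop]
    grind
  calc Fintype.card E = (Set.univ : Set E).ncard := by simp [Set.ncard_univ]
    _ ≤ _ := (Set.ncard_le_ncard hcover).trans (Set.ncard_union_le _ _)
    _ ≤ _ := by
      gcongr
      refine (Finset.set_ncard_biUnion_le _ _).trans ((Finset.sum_le_sum fun u _ => hΔ u).trans ?_)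
      simp [mul_comm]

theorem insertNth_mem_rankedFamilies {ends : E → V × V} {v : V} {n k : ℕ}
    {g : Fin n → E} {e : E}
    (hg : g ∈ rankedFamilies ends v n k 0) (he₁ : (ends e).1 ∉ componentVerts (ends ∘ g) v)
    (he₂ : (ends e).2 ∉ componentVerts (ends ∘ g) v) (x : Fin (n + 1)) :
    x.insertNth e g ∈ (rankedFamilies ends v (n + 1) k 0).filter
      fun h => x ∉ componentEdges (ends ∘ h) v := by
  have hrestrict : (ends ∘ x.insertNth (α := fun _ => E) e g) ∘ x.succAbove = ends ∘ g := by
    ext y <;> simp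
  have hcomp : componentVerts (ends ∘ x.insertNth (α := fun _ => E) e g) v =
      componentVerts (ends ∘ g) v := by
    rw [componentVerts_eq_comp_of_avoid x.succAbove, hrestrict]
    simpa [hrestrict, Fin.range_succAbove] using ⟨he₁, he₂⟩
  rw [Finset.mem_filter, mem_rankedFamilies, componentEdges, hcomp]
  exact ⟨⟨(mem_rankedFamilies.1 hg).1, Nat.zero_le _⟩, by simpa using he₁⟩

variable [Finite V] {ends : E → V × V} {v : V}

theorem rankedFamilies_zero_succ (k b : ℕ) : rankedFamilies ends v 0 k (b + 1) = ∅ := by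
  ext h
  have hpos := ncard_componentVerts_pos (ends ∘ h) v
  have hempty : (componentEdges (ends ∘ h) v).ncard = 0 := by
    rw [Set.eq_empty_of_isEmpty (componentEdges (ends ∘ h) v), Set.ncard_empty]
  simp only [mem_rankedFamilies, cycleRank, hempty, Finset.notMem_empty, iff_false]
  omega

theorem bounds_of_mem_rankedFamilies {n k b : ℕ} {h : Fin n → E}
    (hh : h ∈ rankedFamilies ends v n k b) :
    0 < k ∧ k ≤ n + 1 := by
  rw [← (mem_rankedFamilies.1 hh).1]
  refine ⟨ncard_componentVerts_pos _ v, (ncard_componentVerts_le _ v).trans ?_⟩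
  gcongr
  exact (Set.ncard_le_card _).trans (by simp)

theorem exists_comp_succAbove_mem_rankedFamilies {n k b : ℕ} {h : Fin (n + 1) → E}
    (hh : h ∈ rankedFamilies ends v (n + 1) k (b + 1)) :
    ∃ x, h ∘ x.succAbove ∈ rankedFamilies ends v n k b ∧
      (ends (h x)).1 ∈ componentVerts (ends ∘ h ∘ x.succAbove) v ∧
      (ends (h x)).2 ∈ componentVerts (ends ∘ h ∘ x.succAbove) v := by
  obtain ⟨hk, hb⟩ := mem_rankedFamilies.1 hh
  obtain ⟨x, hx, hcomp⟩ := exists_componentVerts_comp_succAbove_eq (Nat.zero_lt_of_lt hb)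
  have hrank := cycleRank_le_comp_succAbove_add_one hcomp
  rw [Function.comp_assoc] at hcomp hrank
  refine ⟨x, mem_rankedFamilies.2 ⟨hcomp ▸ hk, by omega⟩, ?_⟩
  rw [hcomp]
  exact ⟨hx, (fst_mem_componentVerts_iff_snd_mem _ _ _).1 hx⟩

theorem card_rankedFamilies_succ_rank_le (hends : ends.Injective) (n k b : ℕ) :
    (rankedFamilies ends v (n + 1) k (b + 1)).card ≤
      (n + 1) * k ^ 2 * (rankedFamilies ends v n k b).card := by
  let inside (g : Fin n → E) : Finset E :=
    {e | (ends e).1 ∈ componentVerts (ends ∘ g) v ∧ (ends e).2 ∈ componentVerts (ends ∘ g) v}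
  let extensions (p : Fin (n + 1) × (Fin n → E)) : Finset (Fin (n + 1) → E) :=
    (inside p.2).image fun e => p.1.insertNth e p.2
  have hcover : rankedFamilies ends v (n + 1) k (b + 1) ⊆
      (Finset.univ ×ˢ rankedFamilies ends v n k b).biUnion extensions := fun h hh => by
    obtain ⟨x, hmem, hinside⟩ := exists_comp_succAbove_mem_rankedFamilies hh
    simp only [Finset.mem_biUnion, Finset.mem_product, Finset.mem_univ, true_and]
    exact ⟨(x, h ∘ x.succAbove), hmem, Finset.mem_image.2
      ⟨h x, by simpa [inside] using hinside, Fin.insertNth_self_removeNth x h⟩⟩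
  have hcard : ∀ p ∈ (Finset.univ : Finset (Fin (n + 1))) ×ˢ rankedFamilies ends v n k b,
      (extensions p).card ≤ k ^ 2 := fun p hp => by
    refine Finset.card_image_le.trans ?_
    rw [← Set.ncard_coe_finset, ← (mem_rankedFamilies.1 (Finset.mem_product.1 hp).2).1]
    simpa [inside] using
      ncard_edges_inside_le_sq hends (Set.toFinite (componentVerts (ends ∘ p.2) v))
  refine (Finset.card_le_card hcover).trans ((Finset.card_biUnion_le_card_mul _ _ _ hcard).trans ?_)
  rw [Finset.card_product, Finset.card_fin, mul_right_comm]

theorem card_avoiding_mul_card_rankedFamilies_le {Δ : ℕ}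
    (hΔ : ∀ u, {e | (ends e).1 = u ∨ (ends e).2 = u}.ncard ≤ Δ) (n k : ℕ) (x : Fin (n + 1)) :
    ((Fintype.card E : ℝ) - Δ * k) * (rankedFamilies ends v n k 0).card ≤
      ((rankedFamilies ends v (n + 1) k 0).filter
        fun h => x ∉ componentEdges (ends ∘ h) v).card := by
  let outside (g : Fin n → E) : Finset E :=
    {e | (ends e).1 ∉ componentVerts (ends ∘ g) v ∧ (ends e).2 ∉ componentVerts (ends ∘ g) v}
  have houtside : ∀ g ∈ rankedFamilies ends v n k 0,
      (Fintype.card E : ℝ) - Δ * k ≤ (outside g).card := fun g hg => by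
    have := card_le_card_avoiding_add hΔ (Set.toFinite (componentVerts (ends ∘ g) v))
    rw [(mem_rankedFamilies.1 hg).1] at this
    rw [sub_le_iff_le_add, ← Set.ncard_coe_finset]
    simp only [outside, Finset.coe_filter_univ]
    exact_mod_cast this
  have hinsert : ((rankedFamilies ends v n k 0).sigma outside).card ≤
      ((rankedFamilies ends v (n + 1) k 0).filter
        fun h => x ∉ componentEdges (ends ∘ h) v).card := by
    refine Finset.card_le_card_of_injOn (fun p => x.insertNth p.2 p.1) ?_ ?_
    · rintro ⟨g, e⟩ hge
      simp only [Finset.coe_sigma, Set.mem_sigma_iff, Finset.mem_coe, outside, Finset.mem_filter,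
        Finset.mem_univ, true_and] at hge
      exact insertNth_mem_rankedFamilies hge.1 hge.2.1 hge.2.2 x
    · rintro ⟨g, e⟩ - ⟨g', e'⟩ - heq
      obtain ⟨rfl, rfl⟩ := Fin.insertNth_inj.1 heq
      rfl
  calc _ = ∑ _g ∈ rankedFamilies ends v n k 0, ((Fintype.card E : ℝ) - Δ * k) := by
        rw [Finset.sum_const, nsmul_eq_mul, mul_comm]
    _ ≤ ∑ g ∈ rankedFamilies ends v n k 0, ((outside g).card : ℝ) := Finset.sum_le_sum houtside
    _ ≤ _ := by
        rw [Finset.card_sigma] at hinsert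
        exact_mod_cast hinsert

theorem card_rankedFamilies_le_card_succ {Δ : ℕ}
    (hΔ : ∀ u, {e | (ends e).1 = u ∨ (ends e).2 = u}.ncard ≤ Δ) (n k : ℕ) :
    ((n : ℝ) + 1) * ((Fintype.card E - Δ * k) * (rankedFamilies ends v n k 0).card) ≤
      (n + 2 - k) * (rankedFamilies ends v (n + 1) k 0).card := by
  have hmissed : ∀ h ∈ rankedFamilies ends v (n + 1) k 0,
      ((Finset.univ.filter fun x => x ∉ componentEdges (ends ∘ h) v).card : ℝ) ≤ n + 2 - k :=
    fun h hh => by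
      have hk := ncard_componentVerts_le (ends ∘ h) v
      rw [(mem_rankedFamilies.1 hh).1] at hk
      have hcompl := Set.ncard_add_ncard_compl (componentEdges (ends ∘ h) v)
      rw [Nat.card_fin] at hcompl
      rw [← Set.ncard_coe_finset, Finset.coe_filter_univ, le_sub_iff_add_le]
      change ((componentEdges (ends ∘ h) v)ᶜ.ncard : ℝ) + k ≤ n + 2
      norm_cast
      omega
  calc _ = ∑ _x : Fin (n + 1),
          ((Fintype.card E : ℝ) - Δ * k) * (rankedFamilies ends v n k 0).card := by simp
    _ ≤ ∑ x : Fin (n + 1), (((rankedFamilies ends v (n + 1) k 0).filter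
          fun h => x ∉ componentEdges (ends ∘ h) v).card : ℝ) :=
        Finset.sum_le_sum fun x _ => card_avoiding_mul_card_rankedFamilies_le hΔ n k x
    _ = ∑ h ∈ rankedFamilies ends v (n + 1) k 0,
          ((Finset.univ.filter fun x => x ∉ componentEdges (ends ∘ h) v).card : ℝ) := by
        exact_mod_cast Finset.sum_card_bipartiteAbove_eq_sum_card_bipartiteBelow
          fun x h => x ∉ componentEdges (ends ∘ h) v
    _ ≤ ∑ _h ∈ rankedFamilies ends v (n + 1) k 0, ((n : ℝ) + 2 - k) :=
        Finset.sum_le_sum hmissed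
    _ = _ := by rw [Finset.sum_const, nsmul_eq_mul, mul_comm]

end Counting

section Analysis

theorem le_exp_neg_mul_of_mul_le_mul {δ M N k a b : ℝ} (hδ : 0 < δ) (hδ₁ : δ < 1)
    (hδk : 1 ≤ δ * k) (hkN : k ≤ N) (hNM : N ≤ (1 - δ) * M) (hb : 0 ≤ b)
    (hab : N * ((M - k) * a) ≤ M * ((N + 1 - k) * b)) :
    a ≤ Real.exp (-((δ * k - 1) / M)) * b := by
  have hk : 0 < k := by nlinarith
  have hM : 0 < M := by nlinarith
  have hkM : 0 < M - k := by nlinarith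
  have hcoeff : M * (N + 1 - k) ≤ N * (M - k) * (1 - (δ * k - 1) / M) := by
    have hexpand : N * (M - k) * (1 - (δ * k - 1) / M) =
        N * M - N * (k + δ * k - 1) + N * k * ((δ * k - 1) / M) := by field_simp; ring
    have hN : N * (k + δ * k - 1) ≤ (1 - δ) * M * (k + δ * k - 1) := by gcongr; linarith
    have hrest : 0 ≤ N * k * ((δ * k - 1) / M) := by
      have : 0 ≤ δ * k - 1 := by linarith
      have : 0 < N := by linarith
      positivity
    have hsq : 0 ≤ δ * M * (δ * k - 1) := mul_nonneg (by positivity) (by linarith)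
    linarith
  have hle : a ≤ (1 - (δ * k - 1) / M) * b := by
    have hNk : 0 < N * (M - k) := mul_pos (by linarith) hkM
    refine le_of_mul_le_mul_left ?_ hNk
    calc N * (M - k) * a = N * ((M - k) * a) := by ring
      _ ≤ M * (N + 1 - k) * b := by linarith
      _ ≤ N * (M - k) * (1 - (δ * k - 1) / M) * b := by gcongr
      _ = _ := by ring
  refine hle.trans (mul_le_mul_of_nonneg_right ?_ hb)
  linarith [Real.add_one_le_exp (-((δ * k - 1) / M))]

variable {δ M : ℝ} {k : ℕ} {p : ℕ → ℝ}

theorem le_exp_neg_mul_add (hδ : 0 < δ) (hδ₁ : δ < 1) (hδk : 1 ≤ δ * k) (hp : ∀ n, 0 ≤ p n)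
    (hrec : ∀ n : ℕ, (n + 1) * ((M - k) * p n) ≤ M * ((n + 2 - k) * p (n + 1)))
    {n : ℕ} (hkn : k ≤ n + 1) (s : ℕ) (hs : n + s ≤ (1 - δ) * M) :
    p n ≤ Real.exp (-(s * ((δ * k - 1) / M))) * p (n + s) := by
  induction s with
  | zero => simp
  | succ s ih =>
    push_cast at hs
    have hkn' : (k : ℝ) ≤ n + 1 := mod_cast hkn
    have : (0 : ℝ) ≤ s := s.cast_nonneg
    have hstep : p (n + s) ≤ Real.exp (-((δ * k - 1) / M)) * p (n + s + 1) := by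
      refine le_exp_neg_mul_of_mul_le_mul (N := n + s + 1) hδ hδ₁ hδk (by linarith) (by linarith)
        (hp _) ?_
      have := hrec (n + s)
      push_cast at this
      convert this using 3
      ring
    calc p n ≤ Real.exp (-(s * ((δ * k - 1) / M))) * p (n + s) := ih (by linarith)
      _ ≤ Real.exp (-(s * ((δ * k - 1) / M))) *
          (Real.exp (-((δ * k - 1) / M)) * p (n + s + 1)) := by gcongr
      _ = _ := by
        rw [← mul_assoc, ← Real.exp_add, ← add_assoc]
        push_cast
        congr 2
        ring

theorem le_exp_mul_exp_pow (hδ : 0 < δ) (hδ' : δ < 1 / 2) (hp : ∀ n, 0 ≤ p n)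
    (hp' : ∀ n, p n ≤ 1)
    (hrec : ∀ n : ℕ, (n + 1) * ((M - k) * p n) ≤ M * ((n + 2 - k) * p (n + 1)))
    {n : ℕ} (hkn : k ≤ n + 1) (hn : n ≤ (1 - 2 * δ) * M) :
    p n ≤ Real.exp (3 * δ) * Real.exp (-δ ^ 2) ^ k := by
  rw [← Real.exp_nat_mul, ← Real.exp_add]
  rcases lt_or_ge (δ * k) 1 with hδk | hδk
  · refine (hp' n).trans (Real.one_le_exp ?_)
    nlinarith
  have hkn' : (k : ℝ) ≤ n + 1 := mod_cast hkn
  have hn₁ : (1 : ℝ) ≤ n := by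
    have : (0 : ℝ) < n := by nlinarith
    exact_mod_cast this
  have hnM : (n : ℝ) ≤ M := by nlinarith
  have hM : 0 < M := by linarith
  have hfloor := Nat.floor_le (by positivity : 0 ≤ δ * M)
  have hgain : δ ^ 2 * k - 3 * δ ≤ ⌊δ * M⌋₊ * ((δ * k - 1) / M) := by
    calc δ ^ 2 * k - 3 * δ ≤ (δ * M - 1) * ((δ * k - 1) / M) := by
          rw [mul_div_assoc', le_div_iff₀ hM]
          nlinarith
      _ ≤ _ := by
          gcongr
          exact (Nat.sub_one_lt_floor _).le
  refine (le_exp_neg_mul_add hδ (by linarith) hδk hp hrec hkn ⌊δ * M⌋₊ (by linarith)).trans ?_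
  refine (mul_le_of_le_one_right (Real.exp_nonneg _) (hp' _)).trans (Real.exp_le_exp.2 ?_)
  linarith

end Analysis

section Probability

variable {V E : Type*} [Fintype E]

/-- The probability that, for `n` independent uniform edges from `E`, the component of `v` has `k`
vertices and cyclotomic number at least `b`. -/
noncomputable def rankedPr (ends : E → V × V) (v : V) (n k b : ℕ) : ℝ :=
  (rankedFamilies ends v n k b).card / (Fintype.card E : ℝ) ^ n

theorem rankedPr_nonneg (ends : E → V × V) (v : V) (n k b : ℕ) : 0 ≤ rankedPr ends v n k b := by
  unfold rankedPr
  positivity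

theorem rankedPr_le_one (ends : E → V × V) (v : V) (n k b : ℕ) : rankedPr ends v n k b ≤ 1 := by
  refine div_le_one_of_le₀ ?_ (by positivity)
  exact_mod_cast (Finset.card_le_univ _).trans (by simp)

theorem rankedPr_le_zero_rank (ends : E → V × V) (v : V) (n k b : ℕ) :
    rankedPr ends v n k b ≤ rankedPr ends v n k 0 := by
  unfold rankedPr
  gcongr
  exact rankedFamilies_subset_zero ends v n k b

variable [Finite V] {ends : E → V × V} {v : V}

theorem rankedPr_succ_rank_le (hends : ends.Injective) (n k b : ℕ) :
    rankedPr ends v (n + 1) k (b + 1) ≤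
      ((n + 1) * k ^ 2 / Fintype.card E) * rankedPr ends v n k b := by
  have := card_rankedFamilies_succ_rank_le (v := v) hends n k b
  rw [rankedPr, rankedPr, div_mul_div_comm, ← pow_succ']
  gcongr
  exact_mod_cast this

theorem rankedPr_le_pow_mul (hends : ends.Injective) {n k : ℕ} {B : ℝ}
    (hB : ∀ l ≤ n, rankedPr ends v l k 0 ≤ B) (b : ℕ) :
    rankedPr ends v n k b ≤ (n * k ^ 2 / Fintype.card E) ^ b * B := by
  induction b generalizing n with
  | zero => simpa using hB n le_rfl
  | succ b ih =>
    cases n with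
    | zero => simp [rankedPr, rankedFamilies_zero_succ]
    | succ n =>
      have hB₀ : 0 ≤ B := (rankedPr_nonneg ends v n k 0).trans (hB n n.le_succ)
      calc rankedPr ends v (n + 1) k (b + 1)
          ≤ ((n + 1) * k ^ 2 / Fintype.card E) * rankedPr ends v n k b :=
            rankedPr_succ_rank_le hends n k b
        _ ≤ ((n + 1) * k ^ 2 / Fintype.card E) *
              (((n + 1 : ℕ) * k ^ 2 / Fintype.card E) ^ b * B) := by
            gcongr
            refine (ih fun l hl => hB l (hl.trans n.le_succ)).trans ?_
            gcongr
            exact n.le_succ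
        _ = _ := by rw [pow_succ']; push_cast; ring

variable [Nonempty E] {Δ : ℕ} (hΔ : ∀ u, {e | (ends e).1 = u ∨ (ends e).2 = u}.ncard ≤ Δ)
include hΔ

theorem rankedPr_le_succ (n k : ℕ) :
    ((n : ℝ) + 1) * ((Fintype.card E - Δ * k) * rankedPr ends v n k 0) ≤
      Fintype.card E * ((n + 2 - k) * rankedPr ends v (n + 1) k 0) := by
  have hE : (0 : ℝ) < Fintype.card E := mod_cast Fintype.card_pos
  calc _ = ((n : ℝ) + 1) * ((Fintype.card E - Δ * k) * (rankedFamilies ends v n k 0).card) /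
        (Fintype.card E : ℝ) ^ n := by rw [rankedPr]; ring
    _ ≤ (n + 2 - k) * (rankedFamilies ends v (n + 1) k 0).card / (Fintype.card E : ℝ) ^ n := by
        gcongr ?_ / _
        exact card_rankedFamilies_le_card_succ hΔ n k
    _ = _ := by rw [rankedPr, pow_succ']; field_simp [hE.ne']

theorem rankedPr_zero_rank_le_exp {δ : ℝ} (hδ : 0 < δ) (hδ' : δ < 1 / 2) {n : ℕ}
    (hn : Δ * n ≤ (1 - 2 * δ) * Fintype.card E) (k : ℕ) :
    rankedPr ends v n k 0 ≤ Real.exp (3 * δ) * Real.exp (-δ ^ 2) ^ k := by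
  rcases lt_or_ge (n + 1) k with hk | hk
  · have hempty : rankedFamilies ends v n k 0 = ∅ :=
      Finset.eq_empty_of_forall_notMem fun h hh => hk.not_ge (bounds_of_mem_rankedFamilies hh).2
    rw [rankedPr, hempty, Finset.card_empty, Nat.cast_zero, zero_div]
    positivity
  have hΔ₀ : (0 : ℝ) < Δ := mod_cast pos_of_incident_le hΔ
  refine le_exp_mul_exp_pow (M := Fintype.card E / Δ) (p := fun l => rankedPr ends v l k 0) hδ hδ'
    (fun l => rankedPr_nonneg ends v l k 0) (fun l => rankedPr_le_one ends v l k 0) (fun l => ?_) hk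
    (by rwa [mul_div_assoc', le_div_iff₀' hΔ₀])
  have hsub : (Fintype.card E : ℝ) / Δ - k = (Fintype.card E - Δ * k) / Δ := by
    rw [sub_div, mul_div_cancel_left₀ _ hΔ₀.ne']
  calc _ = ((l : ℝ) + 1) * ((Fintype.card E - Δ * k) * rankedPr ends v l k 0) / Δ := by
        rw [hsub]
        ring
    _ ≤ Fintype.card E * ((l + 2 - k) * rankedPr ends v (l + 1) k 0) / Δ := by
        gcongr ?_ / _
        exact rankedPr_le_succ hΔ l k
    _ = _ := by ring

theorem rankedPr_le_min_mul_exp (hends : ends.Injective) {δ : ℝ} (hδ : 0 < δ) (hδ' : δ < 1 / 2)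
    {n : ℕ} (hn : Δ * n ≤ (1 - 2 * δ) * Fintype.card E) (k b : ℕ) :
    rankedPr ends v n k b ≤
      min (((k : ℝ) ^ 2 / Δ) ^ b) 1 * (Real.exp (3 * δ) * Real.exp (-δ ^ 2) ^ k) := by
  have hE : (0 : ℝ) < Fintype.card E := mod_cast Fintype.card_pos
  have hsize : ∀ l ≤ n, rankedPr ends v l k 0 ≤ Real.exp (3 * δ) * Real.exp (-δ ^ 2) ^ k :=
    fun l hl => rankedPr_zero_rank_le_exp hΔ hδ hδ' (hn.trans' (by gcongr)) k
  have hΔ₀ : (0 : ℝ) < Δ := mod_cast pos_of_incident_le hΔ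
  have hratio : (n : ℝ) * k ^ 2 / Fintype.card E ≤ (k : ℝ) ^ 2 / Δ := by
    rw [div_le_div_iff₀ hE hΔ₀]
    have hnE : (Δ : ℝ) * n ≤ Fintype.card E := by nlinarith
    calc (n : ℝ) * k ^ 2 * Δ = k ^ 2 * (Δ * n) := by ring
      _ ≤ _ := by gcongr
  rw [min_mul_of_nonneg _ _ (by positivity)]
  refine le_min ((rankedPr_le_pow_mul hends hsize b).trans (by gcongr)) ?_
  rw [one_mul]
  exact (rankedPr_le_zero_rank ends v n k b).trans (hsize n le_rfl)

end Probability

section Series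

variable {g : ℕ → ℝ} {β : ℝ}

theorem summable_mul_pow_succ (hg₀ : ∀ k, 0 ≤ g k) (hg₁ : ∀ k, g k ≤ 1) (hβ₀ : 0 ≤ β)
    (hβ₁ : β < 1) : Summable fun k => g k * β ^ (k + 1) := by
  refine .of_nonneg_of_le (fun k => mul_nonneg (hg₀ k) (by positivity))
    (fun k => mul_le_of_le_one_left (by positivity) (hg₁ k)) ?_
  exact (summable_nat_add_iff 1).2 (summable_geometric_of_lt_one hβ₀ hβ₁)

theorem tsum_min_one_mul_pow_le {a b : ℕ → ℝ} (ha : ∀ k, 0 ≤ a k) (hab : ∀ k, a k ≤ b k)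
    (hβ₀ : 0 ≤ β) (hβ₁ : β < 1) :
    ∑' k, min (a k) 1 * β ^ (k + 1) ≤ ∑' k, min (b k) 1 * β ^ (k + 1) := by
  refine Summable.tsum_le_tsum (fun k => by gcongr; exact hab k)
    (summable_mul_pow_succ (fun k => ?_) (fun k => min_le_right _ _) hβ₀ hβ₁)
    (summable_mul_pow_succ (fun k => ?_) (fun k => min_le_right _ _) hβ₀ hβ₁)
  · exact le_min (ha k) zero_le_one
  · exact le_min ((ha k).trans (hab k)) zero_le_one

theorem sum_range_mul_pow_le_sum_range_mul (hg : Monotone g) (hg₀ : ∀ k, 0 ≤ g k) (hβ₀ : 0 ≤ β)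
    (hβ₁ : β ≤ 1) {C : ℝ} {P : ℕ} (hCP : C ≤ P) (N : ℕ) :
    ∑ k ∈ Finset.range N, g k * (C * (β ^ P) ^ (k + 1)) ≤
      ∑ k ∈ Finset.range (P * N), g k * β ^ (k + 1) := by
  induction N with
  | zero => simp
  | succ N ih =>
    rw [Finset.sum_range_succ, Nat.mul_succ, Finset.sum_range_add]
    refine add_le_add ih ?_
    have hterm : ∀ i ∈ Finset.range P,
        g N * (β ^ P) ^ (N + 1) ≤ g (P * N + i) * β ^ (P * N + i + 1) := fun i hi => by
      rw [Finset.mem_range] at hi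
      rw [← pow_mul]
      refine mul_le_mul (hg ?_) (pow_le_pow_of_le_one hβ₀ hβ₁ ?_) (by positivity) (hg₀ _)
      · nlinarith
      · rw [Nat.mul_succ]
        omega
    calc g N * (C * (β ^ P) ^ (N + 1)) ≤ g N * (P * (β ^ P) ^ (N + 1)) := by
          gcongr
          exact hg₀ N
      _ = ∑ _i ∈ Finset.range P, g N * (β ^ P) ^ (N + 1) := by simp; ring
      _ ≤ _ := Finset.sum_le_sum hterm

end Series

section Tail

variable {V E : Type*} [Finite V] [Fintype E] {ends : E → V × V} {v : V}

theorem card_le_cycleRank_div_le_sum (n t : ℕ) :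
    ((Finset.univ.filter fun h : Fin n → E => t ≤ cycleRank (ends ∘ h) v).card : ℝ) /
        (Fintype.card E : ℝ) ^ n ≤
      ∑ k ∈ Finset.range (n + 1), rankedPr ends v n (k + 1) t := by
  have hcover : (Finset.univ.filter fun h : Fin n → E => t ≤ cycleRank (ends ∘ h) v) ⊆
      (Finset.range (n + 1)).biUnion fun k => rankedFamilies ends v n (k + 1) t := fun h hh => by
    have hmem : h ∈ rankedFamilies ends v n (componentVerts (ends ∘ h) v).ncard t :=
      mem_rankedFamilies.2 ⟨rfl, (Finset.mem_filter.1 hh).2⟩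
    obtain ⟨hpos, hle⟩ := bounds_of_mem_rankedFamilies hmem
    refine Finset.mem_biUnion.2 ⟨_, Finset.mem_range.2 (Nat.sub_one_lt_of_le hpos hle), ?_⟩
    rwa [Nat.sub_add_cancel hpos]
  simp only [rankedPr]
  rw [← Finset.sum_div]
  gcongr
  exact_mod_cast (Finset.card_le_card hcover).trans Finset.card_biUnion_le

theorem card_le_cycleRank_div_le_tsum [Nonempty E] (hends : ends.Injective) {Δ : ℕ}
    (hΔ : ∀ u, {e | (ends e).1 = u ∨ (ends e).2 = u}.ncard ≤ Δ) {δ : ℝ} (hδ : 0 < δ)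
    (hδ' : δ < 1 / 2) {n : ℕ} (hn : Δ * n ≤ (1 - 2 * δ) * Fintype.card E) {P : ℕ}
    (hP : Real.exp (3 * δ) ≤ P) {β : ℝ} (hβ₀ : 0 ≤ β) (hβ₁ : β < 1)
    (hβP : β ^ P = Real.exp (-δ ^ 2)) (t : ℕ) :
    ((Finset.univ.filter fun h : Fin n → E => t ≤ cycleRank (ends ∘ h) v).card : ℝ) /
        (Fintype.card E : ℝ) ^ n ≤
      ∑' k : ℕ, min ((((k : ℝ) + 1) ^ 2 / Δ) ^ t) 1 * β ^ (k + 1) := by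
  set g : ℕ → ℝ := fun k => min ((((k : ℝ) + 1) ^ 2 / Δ) ^ t) 1
  have hg : Monotone g := fun k l hkl => by
    have : (k : ℝ) ≤ l := mod_cast hkl
    dsimp only [g]
    gcongr
  have hg₀ : ∀ k, 0 ≤ g k := fun k => le_min (by positivity) zero_le_one
  calc _ ≤ ∑ k ∈ Finset.range (n + 1), rankedPr ends v n (k + 1) t :=
        card_le_cycleRank_div_le_sum n t
    _ ≤ ∑ k ∈ Finset.range (n + 1), g k * (Real.exp (3 * δ) * (β ^ P) ^ (k + 1)) := by
        refine Finset.sum_le_sum fun k _ => ?_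
        have := rankedPr_le_min_mul_exp (v := v) hΔ hends hδ hδ' hn (k + 1) t
        rw [hβP]
        push_cast at this
        exact this
    _ ≤ ∑ k ∈ Finset.range (P * (n + 1)), g k * β ^ (k + 1) :=
        sum_range_mul_pow_le_sum_range_mul hg hg₀ hβ₀ hβ₁.le hP (n + 1)
    _ ≤ _ := (summable_mul_pow_succ hg₀ (fun k => min_le_right _ _) hβ₀
        hβ₁).sum_le_tsum _ fun k _ => mul_nonneg (hg₀ k) (by positivity)

end Tail

section Cuckoo

/-- The endpoints of the possible edges of the cuckoo graph, an edge being the pair of hash values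
of an item. -/
def cuckooEnds (m : ℕ) : Fin m × Fin m → (Fin m ⊕ Fin m) × (Fin m ⊕ Fin m) :=
  Prod.map Sum.inl Sum.inr

theorem cuckooEnds_injective (m : ℕ) : (cuckooEnds m).Injective :=
  Sum.inl_injective.prodMap Sum.inr_injective

theorem ncard_incident_cuckooEnds_le (m : ℕ) (u : Fin m ⊕ Fin m) :
    {e | (cuckooEnds m e).1 = u ∨ (cuckooEnds m e).2 = u}.ncard ≤ m := by
  suffices h : ∃ f : Fin m → Fin m × Fin m,
      {e | (cuckooEnds m e).1 = u ∨ (cuckooEnds m e).2 = u} ⊆ Set.range f by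
    obtain ⟨f, hf⟩ := h
    refine (Set.ncard_le_ncard hf).trans ?_
    rw [← Set.image_univ]
    exact (Set.ncard_image_le).trans (by simp)
  rcases u with a | a
  · exact ⟨fun b => (a, b), by rintro ⟨x, y⟩ h; simp_all [cuckooEnds]⟩
  · exact ⟨fun b => (b, a), by rintro ⟨x, y⟩ h; simp_all [cuckooEnds]⟩

theorem cuckooB_eq_cycleRank {n m : ℕ} (h : Fin n → Fin m × Fin m) (v : Fin m ⊕ Fin m) :
    cuckooB n m (fun x => (h x).1) (fun x => (h x).2) v = cycleRank (cuckooEnds m ∘ h) v :=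
  rfl

theorem cuckooPr_le_cuckooB_eq (n m t : ℕ) (v : Fin m ⊕ Fin m) :
    cuckooPr n m (fun ω => t ≤ cuckooB n m ω.1 ω.2 v) =
      (Finset.univ.filter fun h : Fin n → Fin m × Fin m =>
        t ≤ cycleRank (cuckooEnds m ∘ h) v).card / (Fintype.card (Fin m × Fin m) : ℝ) ^ n := by
  let split := Equiv.arrowProdEquivProdArrow (Fin n) (fun _ => Fin m) (fun _ => Fin m)
  have hevent : Nat.card {ω : HashPair n m // t ≤ cuckooB n m ω.1 ω.2 v} =
      Nat.card {h : Fin n → Fin m × Fin m // t ≤ cycleRank (cuckooEnds m ∘ h) v} :=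
    (Nat.card_congr (split.subtypeEquiv fun h => by rw [← cuckooB_eq_cycleRank]; rfl)).symm
  rw [cuckooPr, hevent, Nat.card_eq_fintype_card, Fintype.card_subtype, ← Nat.card_congr split]
  simp

end Cuckoo

theorem exists_one_sub_two_mul_mul_eq_one {ε : ℝ} (hε : 0 < ε) :
    ∃ δ : ℝ, 0 < δ ∧ δ < 1 / 2 ∧ (1 - 2 * δ) * (1 + ε) = 1 := by
  refine ⟨ε / (2 * (1 + ε)), by positivity, ?_, by field_simp; ring⟩
  rw [div_lt_iff₀ (by positivity)]
  linarith

theorem pow_sq_div_le_pow_cube_div (k m t : ℕ) :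
    (((k : ℝ) + 1) ^ 2 / m) ^ t ≤ (3 * Real.exp 1 ^ 5 * ((k : ℝ) + 1) ^ 3 / m) ^ t := by
  have hexp : 1 ≤ Real.exp 1 ^ 5 := one_le_pow₀ (Real.one_le_exp zero_le_one)
  have hcube : ((k : ℝ) + 1) ^ 2 ≤ ((k : ℝ) + 1) ^ 3 :=
    pow_le_pow_right₀ (le_add_of_nonneg_left k.cast_nonneg) (by norm_num)
  gcongr
  refine hcube.trans (le_mul_of_one_le_left (by positivity) ?_)
  linarith

theorem cuckoo_cyclotomic_tail_series_general (ε : ℝ) (hε : 0 < ε) :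
    ∃ β : ℝ, 0 < β ∧ β < 1 ∧ ∀ n m : ℕ, (1 + ε) * n ≤ m →
      ∀ v : Fin m ⊕ Fin m, ∀ t : ℕ,
        cuckooPr n m (fun ω => t ≤ cuckooB n m ω.1 ω.2 v)
          ≤ ∑' k : ℕ, min ((((k : ℝ) + 1) ^ 2 / m) ^ t) 1 * β ^ (k + 1) := by
  obtain ⟨δ, hδ, hδ', hδε⟩ := exists_one_sub_two_mul_mul_eq_one hε
  obtain ⟨P, hP⟩ := exists_nat_ge (Real.exp (3 * δ))
  have hP₀ : (0 : ℝ) < P := (Real.exp_pos _).trans_le hP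
  have hβP : Real.exp (-δ ^ 2 / P) ^ P = Real.exp (-δ ^ 2) := by
    rw [← Real.exp_nat_mul, mul_div_cancel₀ _ hP₀.ne']
  have hβ₁ : Real.exp (-δ ^ 2 / P) < 1 :=
    Real.exp_lt_one_iff.2 (div_neg_of_neg_of_pos (by nlinarith) hP₀)
  refine ⟨Real.exp (-δ ^ 2 / P), Real.exp_pos _, hβ₁, fun n m hnm v t => ?_⟩
  have : Nonempty (Fin m) := ⟨v.elim id id⟩
  have hload : (m : ℝ) * n ≤ (1 - 2 * δ) * Fintype.card (Fin m × Fin m) := by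
    calc (m : ℝ) * n = m * ((1 - 2 * δ) * ((1 + ε) * n)) := by
          rw [← mul_assoc _ _ (n : ℝ), hδε, one_mul]
      _ ≤ m * ((1 - 2 * δ) * m) := by gcongr; linarith
      _ = _ := by simp; ring
  rw [cuckooPr_le_cuckooB_eq]
  exact card_le_cycleRank_div_le_tsum (cuckooEnds_injective m) (ncard_incident_cuckooEnds_le m)
    hδ hδ' hload hP (Real.exp_nonneg _) hβ₁ hβP t

/-- If `(1+ε)·n ≤ m` then there is a constant `β ∈ (0,1)` depending only on `ε` with
`Pr(B_v ≥ t) ≤ ∑_{k=1}^∞ min((3·e⁵·k³/m)^t, 1) · β^k` for every vertex `v` and `t ≥ 1`.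
(The infinite sum over `k ≥ 1` is written as a `tsum` over `ℕ` with `k` shifted by one.) -/
theorem cuckoo_cyclotomic_tail_series (ε : ℝ) (hε : 0 < ε) :
    ∃ β : ℝ, 0 < β ∧ β < 1 ∧ ∀ n m : ℕ, 0 < n → 0 < m → (1 + ε) * n ≤ m →
      ∀ v : Fin m ⊕ Fin m, ∀ t : ℕ, 1 ≤ t →
        cuckooPr n m (fun ω => t ≤ cuckooB n m ω.1 ω.2 v)
          ≤ ∑' k : ℕ,
              min ((3 * Real.exp 1 ^ 5 * ((k : ℝ) + 1) ^ 3 / m) ^ t) 1 * β ^ (k + 1) := by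
  obtain ⟨β, hβ₀, hβ₁, hβ⟩ := cuckoo_cyclotomic_tail_series_general ε hε
  exact ⟨β, hβ₀, hβ₁, fun n m _ _ hnm v t _ => (hβ n m hnm v t).trans <|
    tsum_min_one_mul_pow_le (fun k => by positivity)
      (fun k => pow_sq_div_le_pow_cube_div k m t) hβ₀.le hβ₁⟩
end
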